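/- Let K be a finite dimensional compact metric space. If there exists a field F with dim_F K = dim K, then dim Kⁿ = n·dim K for every n ≥ 1; in particular K is of basic type. -/

import Mathlib

open Filter Set
open scoped ENNReal

namespace MeanDimPaper

variable {X : Type*} [TopologicalSpace X]

/-- `α` is an open cover of `X`. -/
def IsOpenCover (α : Set (Set X)) : Prop :=
  (∀ U ∈ α, IsOpen U) ∧ ⋃₀ α = Set.univ

/-- The order of a cover `α`: the maximum `n ≥ 0` such that there exist `n + 1`
pairwise distinct members of `α` with nonempty common intersection. -/
noncomputable def ord (α : Set (Set X)) : ℕ∞ :=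
  ⨆ n ∈ {n : ℕ | ∃ f : Fin (n + 1) → Set X,
      Function.Injective f ∧ (∀ i, f i ∈ α) ∧ (⋂ i, f i).Nonempty}, (n : ℕ∞)

/-- `β` refines `α`: every member of `β` is contained in some member of `α`. -/
def Refines (β α : Set (Set X)) : Prop := ∀ V ∈ β, ∃ U ∈ α, V ⊆ U

/-- `D(α)`: the minimum of `ord β` over open covers `β` refining `α`. -/
noncomputable def covD (α : Set (Set X)) : ℕ∞ :=
  ⨅ β ∈ {β : Set (Set X) | IsOpenCover β ∧ Refines β α}, ord β

/-- Topological (covering) dimension: the supremum of `D(α)` over open covers `α`. -/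
noncomputable def topDim (X : Type*) [TopologicalSpace X] : ℕ∞ :=
  ⨆ α ∈ {α : Set (Set X) | IsOpenCover α}, covD α

/-- Diameter of a set with respect to a distance function `d`. -/
noncomputable def diamD (d : X → X → ℝ) (U : Set X) : ℝ :=
  sSup {r | ∃ x ∈ U, ∃ y ∈ U, r = d x y}

/-- Mesh of a cover: the supremum of the diameters of its members. -/
noncomputable def mesh (d : X → X → ℝ) (α : Set (Set X)) : ℝ :=
  sSup (diamD d '' α)

/-- `widim_ε(X, d)`: the minimum of `D(α)` over open covers `α` with `mesh(α, d) < ε`. -/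
noncomputable def widim (ε : ℝ) (d : X → X → ℝ) : ℕ∞ :=
  ⨅ α ∈ {α : Set (Set X) | IsOpenCover α ∧ mesh d α < ε}, covD α

/-- `d` is a metric on `X` compatible with the topology of `X`. -/
structure IsCompatMetric {X : Type*} [TopologicalSpace X] (d : X → X → ℝ) : Prop where
  refl : ∀ x, d x x = 0
  eq_of : ∀ x y, d x y = 0 → x = y
  symm : ∀ x y, d x y = d y x
  triangle : ∀ x y z, d x z ≤ d x y + d y z
  isOpen_iff : ∀ U : Set X, IsOpen U ↔ ∀ x ∈ U, ∃ ε > 0, ∀ y, d x y < ε → y ∈ U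

/-- The dynamical distance `d_n(x, y) = max_{0 ≤ i < n} d(Tⁱ x, Tⁱ y)`. -/
noncomputable def dynDist (d : X → X → ℝ) (T : X → X) (n : ℕ) (x y : X) : ℝ :=
  sSup {r | ∃ i < n, r = d (T^[i] x) (T^[i] y)}

/-- Mean dimension `mdim(X, T)` computed with the metric `d`:
`lim_{ε → 0} lim_{n → ∞} widim_ε(X, d_n) / n`.  The inner limit exists (by
subadditivity of `n ↦ widim_ε(X, d_n)`) so it coincides with the liminf, and the inner
quantity is monotone as `ε` decreases, so the limit as `ε → 0` is the supremum over
`ε > 0`. -/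
noncomputable def mdim (T : X → X) (d : X → X → ℝ) : ℝ≥0∞ :=
  ⨆ (ε : ℝ) (_ : 0 < ε),
    Filter.liminf (fun n : ℕ => (widim ε (dynDist d T n) : ℝ≥0∞) / (n : ℝ≥0∞)) Filter.atTop

/-- The full shift `σ` on the alphabet `K`: `σ((xₙ)ₙ) = (xₙ₊₁)ₙ`. -/
def shift (K : Type*) : (ℤ → K) → ℤ → K := fun x n => x (n + 1)

variable {K : Type*} [TopologicalSpace K]

/-- An ordered `q`-simplex of the nerve complex `N(α)`: a `(q+1)`-tuple of members of `α`
with nonempty common intersection. -/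
def IsNerveSimplex (α : Set (Set K)) {q : ℕ} (f : Fin (q + 1) → Set K) : Prop :=
  (∀ i, f i ∈ α) ∧ (⋂ i, f i).Nonempty

/-- The type of ordered `q`-simplices of the nerve `N(α)`. -/
def NerveSimplex (α : Set (Set K)) (q : ℕ) : Type _ :=
  {f : Fin (q + 1) → Set K // IsNerveSimplex α f}

/-- The `i`-th face of a `(q+1)`-simplex of the nerve. -/
def face {α : Set (Set K)} {q : ℕ} (g : NerveSimplex α (q + 1)) (i : Fin (q + 2)) :
    NerveSimplex α q :=
  ⟨g.1 ∘ i.succAbove, ⟨fun j => g.2.1 _, by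
    obtain ⟨x, hx⟩ := g.2.2
    exact ⟨x, Set.mem_iInter.2 fun j => Set.mem_iInter.1 hx _⟩⟩⟩

/-- A simplex of `N(α)` belongs to the subcomplex `N(α|_A)` iff the common intersection
of its members meets `A`. -/
def InSubNerve (A : Set K) {α : Set (Set K)} {q : ℕ} (f : NerveSimplex α q) : Prop :=
  ((⋂ i, f.1 i) ∩ A).Nonempty

/-- A relative cochain of the pair `(N(α), N(α|_A))`: a `G`-valued simplicial cochain on
`N(α)` vanishing on the subcomplex `N(α|_A)`. -/
def IsRelCochain (A : Set K) {α : Set (Set K)} {q : ℕ} {G : Type*} [AddCommGroup G]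
    (c : NerveSimplex α q → G) : Prop :=
  ∀ f, InSubNerve A f → c f = 0

/-- The simplicial coboundary operator. -/
def cob {α : Set (Set K)} {q : ℕ} {G : Type*} [AddCommGroup G]
    (c : NerveSimplex α q → G) (g : NerveSimplex α (q + 1)) : G :=
  ∑ i : Fin (q + 2), (-1 : ℤ) ^ (i : ℕ) • c (face g i)

/-- A relative `q`-cocycle of the pair `(N(α), N(α|_A))` with coefficients in `G`. -/
def IsRelCocycle (A : Set K) {α : Set (Set K)} {q : ℕ} {G : Type*} [AddCommGroup G]
    (c : NerveSimplex α q → G) : Prop :=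
  IsRelCochain A c ∧ ∀ g : NerveSimplex α (q + 1), cob c g = 0

/-- A relative `q`-coboundary of the pair `(N(α), N(α|_A))` with coefficients in `G`. -/
def IsRelCoboundary (A : Set K) {α : Set (Set K)} {G : Type*} [AddCommGroup G] :
    (q : ℕ) → (NerveSimplex α q → G) → Prop
  | 0, c => ∀ f, c f = 0
  | _ + 1, c => ∃ b, IsRelCochain A b ∧ ∀ g, cob b g = c g

/-- The simplicial map `N(β) → N(α)` induced by a choice `r` assigning to each member of
the refinement `β` a member of `α` containing it. -/
def simplexMap {α β : Set (Set K)} (r : Set K → Set K)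
    (hr : ∀ V ∈ β, V ⊆ r V ∧ r V ∈ α) {q : ℕ} (g : NerveSimplex β q) :
    NerveSimplex α q :=
  ⟨fun i => r (g.1 i), ⟨fun i => (hr _ (g.2.1 i)).2, by
    obtain ⟨x, hx⟩ := g.2.2
    exact ⟨x, Set.mem_iInter.2 fun i => (hr _ (g.2.1 i)).1 (Set.mem_iInter.1 hx i)⟩⟩⟩

/-- "The natural map `H^q(N(α), N(α|_A); G) → Ȟ^q(K, A; G)` is nonzero."
Since the Čech cohomology `Ȟ^q(K, A; G)` is the directed colimit of the cohomologies of
the nerve pairs over refinement, this map is nonzero iff some relative `q`-cocycle `c`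
on `(N(α), N(α|_A))` has the property that, for every open cover `β` refining `α`, the
pullback of `c` along any choice of induced simplicial map `N(β) → N(α)` is not a
relative coboundary (all such choices induce the same map on cohomology). -/
def NerveToCechNonzero (α : Set (Set K)) (A : Set K) (G : Type*) [AddCommGroup G]
    (q : ℕ) : Prop :=
  ∃ c : NerveSimplex α q → G, IsRelCocycle A c ∧
    ∀ β : Set (Set K), IsOpenCover β → Refines β α →
      ∀ (r : Set K → Set K) (hr : ∀ V ∈ β, V ⊆ r V ∧ r V ∈ α),
        ¬ IsRelCoboundary A q (fun g : NerveSimplex β q => c (simplexMap r hr g))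

/-- Cohomological dimension `dim_G K`: the supremum of all `q ≥ 0` such that
`Ȟ^q(K, A; G) ≠ 0` for some closed subset `A ⊆ K`.  An element of the colimit
`Ȟ^q(K, A; G)` is nonzero iff it is represented at some stage `α` by a cocycle class
with nonzero image in the colimit. -/
noncomputable def cohomDim (G : Type*) [AddCommGroup G] (K : Type*) [TopologicalSpace K] :
    ℕ∞ :=
  ⨆ q ∈ {q : ℕ | ∃ A : Set K, IsClosed A ∧
      ∃ α : Set (Set K), IsOpenCover α ∧ NerveToCechNonzero α A G q}, (q : ℕ∞)

/-!
Čech cohomology with coefficients in a field is dual to homology, so a nonzero class of a compact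
pair `(K, A)` can be represented by a cocycle of Alexander–Spanier type which is nonzero on
relative cycles made of arbitrarily small simplices. The cross product of two such cocycles is
nonzero on the shuffle product of the corresponding cycles, because a field has no zero divisors.
Hence `dim_F Kⁿ ≥ n · dim_F K`.

The degree of such a cocycle is at most the covering dimension. Indeed, it may be replaced by its
alternation, which vanishes on simplices with a repeated vertex. If `dim K ≤ d`, a fine cover of
order at most `d` gives a vertex map close to the identity under which every small simplex of
dimension greater than `d` acquires a repeated vertex, while the values of the cocycle on small
cycles do not change.

Conversely `dim (X × Y) ≤ dim X + dim Y`. Given functions subordinate to covers of `X` and `Y`,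
the sets where some level separates a given subfamily of the functions from the rest cover `X × Y`
by small cells. The subfamilies of the cells containing a given point form a chain, and each has
at least `2` and at most `dim X + dim Y + 2` members.
-/

section Cochains

variable {V E E' : Type*} [AddCommGroup E] [AddCommGroup E']

/-- Simplicial coboundary of a cochain on ordered simplices. A simplex is the list of its vertices,
so a `q`-simplex has length `q + 1`, and the empty list is the simplex of the augmentation. -/
def coboundary (φ : List V → E) (l : List V) : E :=
  ∑ i ∈ Finset.range l.length, (-1 : ℤ) ^ i • φ (l.eraseIdx i)

@[simp] lemma coboundary_nil (φ : List V → E) : coboundary φ [] = 0 := rfl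

lemma coboundary_cons (φ : List V → E) (x : V) (l : List V) :
    coboundary φ (x :: l) = φ l - coboundary (fun m => φ (x :: m)) l := by
  simp only [coboundary, List.length_cons, Finset.sum_range_succ', List.eraseIdx_cons_succ,
    List.eraseIdx_cons_zero, pow_succ, mul_neg_one, neg_smul, Finset.sum_neg_distrib, pow_zero,
    one_smul]
  abel

lemma map_coboundary {G : Type*} [FunLike G E E'] [AddMonoidHomClass G E E'] (f : G)
    (φ : List V → E) (l : List V) : f (coboundary φ l) = coboundary (fun m => f (φ m)) l := by
  simp only [coboundary, map_sum, map_zsmul]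

lemma coboundary_map {W : Type*} (f : V → W) (φ : List W → E) (l : List V) :
    coboundary φ (l.map f) = coboundary (fun m => φ (m.map f)) l := by
  induction l generalizing φ with
  | nil => rfl
  | cons x l ih => simp only [List.map_cons, coboundary_cons, ih]

end Cochains

section Chains

variable {R : Type*} [Ring R] {V W E : Type*} [AddCommGroup E] [Module R E]

lemma map_mem_of_mem_supported {ι : Type*} {f : (ι →₀ R) →ₗ[R] E} {S : Set ι} {P : Submodule R E}
    (h : ∀ i ∈ S, f (Finsupp.single i 1) ∈ P) {c : ι →₀ R} (hc : c ∈ Finsupp.supported R R S) :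
    f c ∈ P := by
  rw [Finsupp.supported_eq_span_single] at hc
  have hspan : Submodule.span R ((fun i => Finsupp.single i (1 : R)) '' S) ≤ P.comap f :=
    Submodule.span_le.2 (Set.image_subset_iff.2 h)
  exact hspan hc

lemma eqOn_supported {ι : Type*} {f g : (ι →₀ R) →ₗ[R] E} {S : Set ι}
    (h : ∀ i ∈ S, f (Finsupp.single i 1) = g (Finsupp.single i 1)) {c : ι →₀ R}
    (hc : c ∈ Finsupp.supported R R S) : f c = g c :=
  sub_eq_zero.1 (map_mem_of_mem_supported (f := f - g) (P := ⊥)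
    (fun i hi => sub_eq_zero.2 (h i hi)) hc)

lemma linearCombination_mem_of_supported {ι : Type*} {φ : ι → E} {S : Set ι} {P : Submodule R E}
    (h : ∀ i ∈ S, φ i ∈ P) {c : ι →₀ R} (hc : c ∈ Finsupp.supported R R S) :
    Finsupp.linearCombination R φ c ∈ P :=
  map_mem_of_mem_supported (fun i hi => by simpa using h i hi) hc

lemma linearCombination_eq_zero_of_supported {ι : Type*} {φ : ι → E} {S : Set ι}
    (h : ∀ i ∈ S, φ i = 0) {c : ι →₀ R} (hc : c ∈ Finsupp.supported R R S) :
    Finsupp.linearCombination R φ c = 0 :=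
  linearCombination_mem_of_supported (P := ⊥) h hc

/-- Augmented chains of ordered simplices with vertices in `V`. -/
abbrev SimplexChain (R V : Type*) [Ring R] := List V →₀ R

/-- Boundary operator on chains of ordered simplices: the boundary of a simplex is the coboundary of
the tautological chain-valued cochain. -/
noncomputable def boundary : SimplexChain R V →ₗ[R] SimplexChain R V :=
  Finsupp.linearCombination R (coboundary fun l => Finsupp.single l 1)

/-- Cone over a chain: the vertex `v` is prepended to each simplex. -/
noncomputable def cone (v : V) : SimplexChain R V →ₗ[R] SimplexChain R V :=
  Finsupp.lmapDomain R R (List.cons v)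

/-- Chain map induced by a map of vertices. -/
noncomputable def mapVertices (f : V → W) : SimplexChain R V →ₗ[R] SimplexChain R W :=
  Finsupp.lmapDomain R R (List.map f)

@[simp] lemma cone_single (v : V) (l : List V) (a : R) :
    cone v (Finsupp.single l a) = Finsupp.single (v :: l) a :=
  Finsupp.mapDomain_single

@[simp] lemma mapVertices_single (f : V → W) (l : List V) (a : R) :
    mapVertices f (Finsupp.single l a) = Finsupp.single (l.map f) a :=
  Finsupp.mapDomain_single

lemma boundary_single (l : List V) :
    boundary (Finsupp.single l (1 : R)) = coboundary (fun m => Finsupp.single m 1) l := by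
  simp [boundary]

@[simp] lemma boundary_single_nil (a : R) : boundary (Finsupp.single ([] : List V) a) = 0 := by
  simp [boundary]

lemma linearCombination_boundary (φ : List V → E) (c : SimplexChain R V) :
    Finsupp.linearCombination R φ (boundary c) =
      Finsupp.linearCombination R (coboundary φ) c := by
  suffices h : Finsupp.linearCombination R φ ∘ₗ boundary =
      Finsupp.linearCombination R (coboundary φ) from
    LinearMap.congr_fun h c
  ext l
  simp [boundary_single, map_coboundary]

lemma linearCombination_cone (φ : List V → E) (v : V) (c : SimplexChain R V) :
    Finsupp.linearCombination R φ (cone v c) =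
      Finsupp.linearCombination R (fun l => φ (v :: l)) c :=
  Finsupp.linearCombination_mapDomain R _ c

lemma linearCombination_mapVertices (φ : List W → E) (f : V → W) (c : SimplexChain R V) :
    Finsupp.linearCombination R φ (mapVertices f c) =
      Finsupp.linearCombination R (fun l => φ (l.map f)) c :=
  Finsupp.linearCombination_mapDomain R _ c

lemma boundary_cone (v : V) (c : SimplexChain R V) :
    boundary (cone v c) = c - cone v (boundary c) := by
  suffices h : boundary ∘ₗ cone v = LinearMap.id - cone v ∘ₗ boundary (R := R)
    from LinearMap.congr_fun h c
  refine Finsupp.lhom_ext' fun l => LinearMap.ext_ring ?_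
  simp [boundary_single, coboundary_cons, map_coboundary]

lemma boundary_single_cons (x : V) (l : List V) :
    boundary (Finsupp.single (x :: l) (1 : R)) =
      Finsupp.single l 1 - cone x (boundary (Finsupp.single l 1)) := by
  rw [← cone_single, boundary_cone]

lemma boundary_boundary (c : SimplexChain R V) : boundary (boundary c) = 0 := by
  suffices h : boundary ∘ₗ boundary (R := R) (V := V) = 0 from LinearMap.congr_fun h c
  refine Finsupp.lhom_ext' fun l => LinearMap.ext_ring ?_
  induction l with
  | nil => simp
  | cons x l ih =>
    have ih : boundary (boundary (Finsupp.single l (1 : R))) = 0 := ih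
    simp [boundary_single_cons, boundary_cone, ih]

lemma coboundary_mem {P : Submodule R E} {φ : List V → E} {l : List V}
    (h : ∀ m : List V, m.length + 1 = l.length → m.Sublist l → φ m ∈ P) : coboundary φ l ∈ P :=
  Submodule.sum_mem _ fun i hi => zsmul_mem
    (h _ (List.length_eraseIdx_add_one (Finset.mem_range.1 hi)) (List.eraseIdx_sublist l i)) _

lemma boundary_single_mem_supported (l : List V) :
    boundary (Finsupp.single l (1 : R)) ∈
      Finsupp.supported R R {m | m.length + 1 = l.length ∧ m.Sublist l} := by
  rw [boundary_single]
  exact coboundary_mem fun m hlen hsub => Finsupp.single_mem_supported R 1 ⟨hlen, hsub⟩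

lemma cone_mem_supported {S T : Set (List V)} {v : V} (h : ∀ l ∈ S, v :: l ∈ T)
    {c : SimplexChain R V} (hc : c ∈ Finsupp.supported R R S) :
    cone v c ∈ Finsupp.supported R R T :=
  map_mem_of_mem_supported
    (fun l hl => by simpa using Finsupp.single_mem_supported R (1 : R) (h l hl)) hc

lemma boundary_mapVertices (f : V → W) (c : SimplexChain R V) :
    boundary (mapVertices f c) = mapVertices f (boundary c) := by
  suffices h : boundary ∘ₗ mapVertices f = mapVertices f ∘ₗ boundary (R := R)
    from LinearMap.congr_fun h c
  refine Finsupp.lhom_ext' fun l => LinearMap.ext_ring ?_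
  simp [boundary_single, coboundary_map, map_coboundary]

end Chains

section CarrierHomotopy

variable {R : Type*} [Ring R] {V W : Type*}

/-- The simplices all of whose vertices lie in `T`. -/
def simplicesIn (T : Set W) : Set (List W) := {m | ∀ b ∈ m, b ∈ T}

lemma simplicesIn_mono {S T : Set W} (h : S ⊆ T) : simplicesIn S ⊆ simplicesIn T :=
  fun _ hm b hb => h (hm b hb)

lemma cons_mem_simplicesIn {T : Set W} {b : W} (hb : b ∈ T) (m : List W)
    (hm : m ∈ simplicesIn T) : b :: m ∈ simplicesIn T :=
  List.forall_mem_cons.2 ⟨hb, hm⟩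

/-- Recursively built chain homotopy from `g` to `f`: on a simplex `l`, a filling of
`f l - g l - H (∂ l)` by the cone over a point of its carrier. -/
noncomputable def carrierHomotopy (f g : SimplexChain R V →ₗ[R] SimplexChain R W)
    (apex : V → List V → W) : List V → SimplexChain R W
  | [] => 0
  | x :: l => cone (apex x l) (f (Finsupp.single (x :: l) 1) - g (Finsupp.single (x :: l) 1) -
      ∑ i : Fin (l.length + 1), (-1 : ℤ) ^ (i : ℕ) •
        carrierHomotopy f g apex ((x :: l).eraseIdx i))
termination_by l => l.length
decreasing_by simp [List.length_eraseIdx, Nat.le_of_lt_succ i.2]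

lemma carrierHomotopy_cons (f g : SimplexChain R V →ₗ[R] SimplexChain R W) (apex : V → List V → W)
    (x : V) (l : List V) :
    carrierHomotopy f g apex (x :: l) = cone (apex x l) (f (Finsupp.single (x :: l) 1) -
      g (Finsupp.single (x :: l) 1) - coboundary (carrierHomotopy f g apex) (x :: l)) := by
  rw [carrierHomotopy, coboundary, List.length_cons, Finset.sum_range]

lemma carrierHomotopy_mem_supported {f g : SimplexChain R V →ₗ[R] SimplexChain R W}
    {apex : V → List V → W} {C : List V → Set W} (hC : ∀ l m : List V, m.Sublist l → C m ⊆ C l)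
    (hapex : ∀ x l, apex x l ∈ C (x :: l))
    (hf : ∀ l, f (Finsupp.single l 1) ∈ Finsupp.supported R R (simplicesIn (C l)))
    (hg : ∀ l, g (Finsupp.single l 1) ∈ Finsupp.supported R R (simplicesIn (C l)))
    (l : List V) :
    carrierHomotopy f g apex l ∈ Finsupp.supported R R (simplicesIn (C l)) := by
  induction hn : l.length using Nat.strong_induction_on generalizing l with
  | _ n ih =>
    cases l with
    | nil => simp [carrierHomotopy]
    | cons x l =>
      rw [carrierHomotopy_cons]
      refine cone_mem_supported (cons_mem_simplicesIn (hapex x l))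
        (sub_mem (sub_mem (hf _) (hg _)) (coboundary_mem fun m hlen hsub => ?_))
      exact Finsupp.supported_mono (simplicesIn_mono (hC _ _ hsub)) (ih _ (by lia) m rfl)

lemma boundary_carrierHomotopy {f g : SimplexChain R V →ₗ[R] SimplexChain R W}
    {apex : V → List V → W}
    (hf : ∀ c, boundary (f c) = f (boundary c)) (hg : ∀ c, boundary (g c) = g (boundary c))
    (hnil : f (Finsupp.single [] 1) = g (Finsupp.single [] 1)) (l : List V) :
    boundary (carrierHomotopy f g apex l) =
      f (Finsupp.single l 1) - g (Finsupp.single l 1) -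
        coboundary (carrierHomotopy f g apex) l := by
  set H := carrierHomotopy f g apex
  induction hn : l.length using Nat.strong_induction_on generalizing l with
  | _ n ih =>
    cases l with
    | nil => simp [H, carrierHomotopy, hnil]
    | cons x l =>
      have hfaces : boundary (coboundary H (x :: l)) =
          f (boundary (Finsupp.single (x :: l) 1)) - g (boundary (Finsupp.single (x :: l) 1)) := by
        have hH := eqOn_supported (f := boundary ∘ₗ Finsupp.linearCombination R H)
          (g := f - g - Finsupp.linearCombination R (coboundary H))
          (fun m hm => by simpa using ih m.length (by have := hm.1; lia) m rfl)
          (boundary_single_mem_supported (x :: l))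
        have hzero : Finsupp.linearCombination R (coboundary H)
            (boundary (Finsupp.single (x :: l) 1)) = 0 := by
          rw [← linearCombination_boundary, boundary_boundary, map_zero]
        simpa [linearCombination_boundary H, hzero] using hH
      have hcycle : boundary (f (Finsupp.single (x :: l) 1) - g (Finsupp.single (x :: l) 1) -
          coboundary H (x :: l)) = 0 := by
        rw [map_sub, map_sub, hf, hg, hfaces, sub_self]
      rw [show H (x :: l) = _ from carrierHomotopy_cons f g apex x l, boundary_cone, hcycle,
        map_zero, sub_zero]

theorem exists_homotopy_of_acyclic_carrier {f g : SimplexChain R V →ₗ[R] SimplexChain R W}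
    (hf : ∀ c, boundary (f c) = f (boundary c)) (hg : ∀ c, boundary (g c) = g (boundary c))
    (hnil : f (Finsupp.single [] 1) = g (Finsupp.single [] 1))
    {C : List V → Set W} (hC : ∀ l m : List V, m.Sublist l → C m ⊆ C l)
    (hne : ∀ x l, (C (x :: l)).Nonempty)
    (hfC : ∀ l, f (Finsupp.single l 1) ∈ Finsupp.supported R R (simplicesIn (C l)))
    (hgC : ∀ l, g (Finsupp.single l 1) ∈ Finsupp.supported R R (simplicesIn (C l))) :
    ∃ H : SimplexChain R V →ₗ[R] SimplexChain R W,
      (∀ l, H (Finsupp.single l 1) ∈ Finsupp.supported R R (simplicesIn (C l))) ∧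
      ∀ c, boundary (H c) + H (boundary c) = f c - g c := by
  choose apex hapex using hne
  refine ⟨Finsupp.linearCombination R (carrierHomotopy f g apex), fun l => ?_, fun c => ?_⟩
  · simpa using carrierHomotopy_mem_supported hC hapex hfC hgC l
  · suffices h : boundary ∘ₗ Finsupp.linearCombination R (carrierHomotopy f g apex) +
        Finsupp.linearCombination R (carrierHomotopy f g apex) ∘ₗ boundary = f - g from
      LinearMap.congr_fun h c
    refine Finsupp.lhom_ext' fun l => LinearMap.ext_ring ?_
    simp [linearCombination_boundary, boundary_carrierHomotopy hf hg hnil]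

end CarrierHomotopy

section Alternation

variable {R : Type*} [Ring R] {V : Type*} [LinearOrder V]

/-- Signed insertion of a vertex into a strictly increasing simplex, zero if the vertex is already
present. -/
noncomputable def insertVertex (R : Type*) [Ring R] (x : V) : List V → SimplexChain R V
  | [] => Finsupp.single [x] 1
  | y :: t =>
    if x < y then Finsupp.single (x :: y :: t) 1
    else if x = y then 0
    else -cone y (insertVertex R x t)

/-- Signed sorting of a simplex, zero if a vertex is repeated. -/
noncomputable def alternateSimplex (R : Type*) [Ring R] : List V → SimplexChain R V
  | [] => Finsupp.single [] 1
  | x :: l => Finsupp.linearCombination R (insertVertex R x) (alternateSimplex R l)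

/-- The alternation chain map: a projection of ordered chains to alternating ones. -/
noncomputable def alternation : SimplexChain R V →ₗ[R] SimplexChain R V :=
  Finsupp.linearCombination R (alternateSimplex R)

lemma alternation_single (l : List V) :
    alternation (Finsupp.single l (1 : R)) = alternateSimplex R l := by
  simp [alternation]

lemma insertVertex_mem_supported {x : V} {t : List V} (ht : t.Pairwise (· < ·)) :
    insertVertex R x t ∈
      Finsupp.supported R R {m | m.Perm (x :: t) ∧ m.Pairwise (· < ·)} := by
  induction t with
  | nil => exact Finsupp.single_mem_supported R _ (by simp)
  | cons y t ih =>
    obtain ⟨hyt, ht'⟩ := List.pairwise_cons.1 ht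
    rw [insertVertex]
    split_ifs with hlt heq
    · exact Finsupp.single_mem_supported R _ ⟨.refl _, List.pairwise_cons.2
        ⟨List.forall_mem_cons.2 ⟨hlt, fun a ha => hlt.trans (hyt a ha)⟩, ht⟩⟩
    · exact zero_mem _
    · refine neg_mem (cone_mem_supported (fun m hm => ?_) (ih ht'))
      refine ⟨(hm.1.cons y).trans (.swap _ _ _), List.pairwise_cons.2 ⟨fun a ha => ?_, hm.2⟩⟩
      rcases List.mem_cons.1 (hm.1.mem_iff.1 ha) with rfl | ha
      · exact lt_of_le_of_ne (not_lt.1 hlt) (Ne.symm heq)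
      · exact hyt a ha

lemma insertVertex_of_forall_lt {x : V} {t : List V} (h : ∀ a ∈ t, x < a) :
    insertVertex R x t = Finsupp.single (x :: t) 1 := by
  cases t with
  | nil => rfl
  | cons y t => rw [insertVertex, if_pos (h y List.mem_cons_self)]

lemma insertVertex_of_mem {x : V} {t : List V} (ht : t.Pairwise (· < ·)) (h : x ∈ t) :
    insertVertex R x t = 0 := by
  induction t with
  | nil => simp at h
  | cons y t ih =>
    obtain ⟨hyt, ht'⟩ := List.pairwise_cons.1 ht
    rcases List.mem_cons.1 h with rfl | h
    · simp [insertVertex]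
    · simp [insertVertex, (hyt x h).not_gt, (hyt x h).ne', ih ht' h]

lemma boundary_insertVertex {x : V} {t : List V} (ht : t.Pairwise (· < ·)) :
    boundary (insertVertex R x t) = Finsupp.single t 1 - coboundary (insertVertex R x) t := by
  induction t with
  | nil => simp [insertVertex, boundary_single_cons]
  | cons y t ih =>
    obtain ⟨hyt, ht'⟩ := List.pairwise_cons.1 ht
    rw [coboundary_cons]
    rcases lt_trichotomy x y with hlt | rfl | hgt
    · have hins : ∀ l, insertVertex R x (y :: l) = cone x (cone y (Finsupp.single l 1)) :=
        fun l => by simp [insertVertex, hlt]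
      simp only [hins, ← map_coboundary, insertVertex_of_forall_lt fun a ha => hlt.trans (hyt a ha),
        boundary_cone, boundary_single]
      simp
    · have hins : ∀ l, insertVertex R x (x :: l) = 0 := fun l => by simp [insertVertex]
      simp [hins, coboundary, insertVertex_of_forall_lt hyt]
    · have hins : ∀ l, insertVertex R x (y :: l) = -cone y (insertVertex R x l) :=
        fun l => by simp [insertVertex, hgt.not_gt, hgt.ne']
      simp only [hins, ← LinearMap.neg_apply, ← map_coboundary]
      simp only [LinearMap.neg_apply, map_neg, boundary_cone, ih ht', map_sub, cone_single]
      abel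

lemma alternateSimplex_mem_supported (l : List V) :
    alternateSimplex R l ∈ Finsupp.supported R R {m | m.Perm l ∧ m.Pairwise (· < ·)} := by
  induction l with
  | nil => exact Finsupp.single_mem_supported R _ (by simp)
  | cons x l ih =>
    refine linearCombination_mem_of_supported (fun m hm => ?_) ih
    refine Finsupp.supported_mono (fun k hk => ?_) (insertVertex_mem_supported hm.2)
    exact ⟨hk.1.trans (hm.1.cons x), hk.2⟩

lemma alternateSimplex_eq_zero {l : List V} (h : ¬ l.Nodup) : alternateSimplex R l = 0 := by
  induction l with
  | nil => simp at h
  | cons x l ih =>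
    rw [alternateSimplex]
    by_cases hx : x ∈ l
    · exact linearCombination_eq_zero_of_supported
        (fun m hm => insertVertex_of_mem hm.2 (hm.1.mem_iff.2 hx))
        (alternateSimplex_mem_supported l)
    · rw [ih fun hl => h (List.nodup_cons.2 ⟨hx, hl⟩), map_zero]

lemma boundary_linearCombination_insertVertex {x : V} {c : SimplexChain R V}
    (hc : c ∈ Finsupp.supported R R {m : List V | m.Pairwise (· < ·)}) :
    boundary (Finsupp.linearCombination R (insertVertex R x) c) =
      c - Finsupp.linearCombination R (insertVertex R x) (boundary c) := by
  rw [linearCombination_boundary]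
  exact eqOn_supported (f := boundary ∘ₗ Finsupp.linearCombination R (insertVertex R x))
    (g := LinearMap.id - Finsupp.linearCombination R (coboundary (insertVertex R x)))
    (fun m hm => by simpa using boundary_insertVertex hm) hc

lemma boundary_alternateSimplex (l : List V) :
    boundary (alternateSimplex R l) = coboundary (alternateSimplex R) l := by
  induction l with
  | nil => simp [alternateSimplex]
  | cons x l ih =>
    rw [coboundary_cons, alternateSimplex, boundary_linearCombination_insertVertex
      (Finsupp.supported_mono (fun m hm => hm.2) (alternateSimplex_mem_supported l)), ih,
      map_coboundary]
    simp only [alternateSimplex]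

lemma boundary_alternation (c : SimplexChain R V) :
    boundary (alternation c) = alternation (boundary c) := by
  suffices h : boundary ∘ₗ alternation = alternation ∘ₗ boundary (R := R) (V := V) from
    LinearMap.congr_fun h c
  refine Finsupp.lhom_ext' fun l => LinearMap.ext_ring ?_
  simp [alternation, linearCombination_boundary, boundary_alternateSimplex]

end Alternation

section ShuffleProduct

variable {R : Type*} [CommRing R] {V W : Type*}

/-- The involution of the chain complex multiplying a simplex with `n` vertices by `(-1) ^ n`. -/
noncomputable def degreeInvolution : SimplexChain R V →ₗ[R] SimplexChain R V :=
  Finsupp.linearCombination R fun l => Finsupp.single l ((-1) ^ l.length)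

/-- The product of the augmentations, placed on the empty simplex. -/
noncomputable def augmentationProduct :
    SimplexChain R V →ₗ[R] SimplexChain R W →ₗ[R] SimplexChain R (V × W) :=
  ((LinearMap.mul R R).compl₁₂ (Finsupp.lapply []) (Finsupp.lapply [])).compr₂ (Finsupp.lsingle [])

/-- The Eilenberg–Zilber shuffle product of two simplices: every monotone path from the product of
the first vertices begins with a step in the first or in the second factor. -/
noncomputable def shuffleSimplex (R : Type*) [CommRing R] :
    List V → List W → SimplexChain R (V × W)
  | [], _ => 0
  | _ :: _, [] => 0
  | x :: s, y :: t => cone (x, y)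
      (augmentationProduct (Finsupp.single s 1) (Finsupp.single t 1) +
        shuffleSimplex R s (y :: t) + (-1 : R) ^ s.length • shuffleSimplex R (x :: s) t)
termination_by s t => s.length + t.length

/-- The shuffle product of chains. -/
noncomputable def shuffle :
    SimplexChain R V →ₗ[R] SimplexChain R W →ₗ[R] SimplexChain R (V × W) :=
  Finsupp.linearCombination R fun s => Finsupp.linearCombination R (shuffleSimplex R s)

@[simp] lemma degreeInvolution_single (l : List V) (a : R) :
    degreeInvolution (Finsupp.single l a) = a • Finsupp.single l ((-1) ^ l.length) := by
  simp [degreeInvolution]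

lemma degreeInvolution_cone (v : V) (c : SimplexChain R V) :
    degreeInvolution (cone v c) = -cone v (degreeInvolution c) := by
  suffices h : degreeInvolution ∘ₗ cone v = -(cone (R := R) v ∘ₗ degreeInvolution) from
    LinearMap.congr_fun h c
  refine Finsupp.lhom_ext' fun l => LinearMap.ext_ring ?_
  simp [pow_succ, Finsupp.single_neg]

lemma degreeInvolution_degreeInvolution (c : SimplexChain R V) :
    degreeInvolution (degreeInvolution c) = c := by
  suffices h : degreeInvolution ∘ₗ degreeInvolution (R := R) (V := V) = LinearMap.id from
    LinearMap.congr_fun h c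
  refine Finsupp.lhom_ext' fun l => LinearMap.ext_ring ?_
  simp [← mul_pow]

lemma boundary_degreeInvolution (c : SimplexChain R V) :
    boundary (degreeInvolution c) = -degreeInvolution (boundary c) := by
  suffices h : boundary ∘ₗ degreeInvolution = -(degreeInvolution ∘ₗ boundary (R := R) (V := V)) from
    LinearMap.congr_fun h c
  refine Finsupp.lhom_ext' fun l => LinearMap.ext_ring ?_
  have hsingle (m : List V) : degreeInvolution (Finsupp.single m (1 : R)) =
      (-1 : R) ^ m.length • Finsupp.single m 1 := by simp
  suffices h : boundary (degreeInvolution (Finsupp.single l (1 : R))) =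
    -degreeInvolution (boundary (Finsupp.single l 1)) from h
  rw [← neg_eq_iff_eq_neg, hsingle, map_smul, ← neg_smul, ← mul_neg_one, ← pow_succ]
  refine Eq.symm (eqOn_supported (f := degreeInvolution (R := R) (V := V))
    (g := (-1 : R) ^ (l.length + 1) • LinearMap.id)
    (fun m hm => ?_) (boundary_single_mem_supported l))
  rw [hsingle, ← hm.1]
  simp [pow_succ]

@[simp] lemma degreeInvolution_apply_nil (c : SimplexChain R V) : degreeInvolution c [] = c [] := by
  suffices h : Finsupp.lapply [] ∘ₗ degreeInvolution = Finsupp.lapply (R := R) (M := R) [] from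
    LinearMap.congr_fun h c
  refine Finsupp.lhom_ext' fun l => LinearMap.ext_ring ?_
  cases l <;> simp

@[simp] lemma cone_apply_nil (v : V) (c : SimplexChain R V) : cone v c [] = 0 :=
  Finsupp.mapDomain_of_notMem_range c [] (by simp)

@[simp] lemma augmentationProduct_apply (c : SimplexChain R V) (d : SimplexChain R W) :
    augmentationProduct c d = Finsupp.single [] (c [] * d []) := rfl

lemma shuffle_single_single (s : List V) (t : List W) :
    shuffle (Finsupp.single s 1) (Finsupp.single t 1) = shuffleSimplex R s t := by
  simp [shuffle]

@[simp] lemma shuffle_single_nil_left (d : SimplexChain R W) :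
    shuffle (Finsupp.single ([] : List V) 1) d = 0 := by
  suffices h : shuffle (Finsupp.single ([] : List V) (1 : R)) = 0 from LinearMap.congr_fun h d
  refine Finsupp.lhom_ext' fun t => LinearMap.ext_ring ?_
  simp [shuffle_single_single, shuffleSimplex]

@[simp] lemma shuffle_single_nil_right (c : SimplexChain R V) :
    shuffle c (Finsupp.single ([] : List W) 1) = 0 := by
  suffices h : shuffle.flip (Finsupp.single ([] : List W) (1 : R)) = 0 from LinearMap.congr_fun h c
  refine Finsupp.lhom_ext' fun s => LinearMap.ext_ring ?_
  cases s <;> simp [shuffle_single_single, shuffleSimplex]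

lemma shuffle_cone_cone (x : V) (y : W) (c : SimplexChain R V) (d : SimplexChain R W) :
    shuffle (cone x c) (cone y d) = cone (x, y) (augmentationProduct c d +
      shuffle c (cone y d) + shuffle (cone x (degreeInvolution c)) d) := by
  suffices h : shuffle.compl₁₂ (cone x) (cone y) = (augmentationProduct + shuffle.compl₂ (cone y) +
      shuffle ∘ₗ cone x ∘ₗ degreeInvolution).compr₂ (cone (R := R) (x, y)) from
    LinearMap.congr_fun₂ h c d
  refine Finsupp.lhom_ext' fun s => LinearMap.ext_ring (Finsupp.lhom_ext' fun t =>
    LinearMap.ext_ring ?_)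
  have hsign : cone x (degreeInvolution (Finsupp.single s (1 : R))) =
      (-1 : R) ^ s.length • Finsupp.single (x :: s) 1 := by simp
  simp only [LinearMap.comp_apply, LinearMap.compl₁₂_apply, LinearMap.compr₂_apply,
    LinearMap.add_apply, LinearMap.compl₂_apply, Finsupp.lsingle_apply, hsign, cone_single,
    map_smul, LinearMap.smul_apply, shuffle_single_single, shuffleSimplex]

/-- Leibniz rule for the shuffle product; the last term is the defect in degree zero. -/
def ShuffleLeibniz (c : SimplexChain R V) (d : SimplexChain R W) : Prop :=
  boundary (shuffle c d) = shuffle (boundary c) d - shuffle (degreeInvolution c) (boundary d) +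
    augmentationProduct (boundary c) (boundary d)

lemma ShuffleLeibniz.smul {c : SimplexChain R V} {d : SimplexChain R W} (h : ShuffleLeibniz c d)
    (a : R) : ShuffleLeibniz (a • c) d := by
  rw [ShuffleLeibniz] at *
  simp only [map_smul, LinearMap.smul_apply, h, smul_add, smul_sub]

lemma ShuffleLeibniz.cone_cone (x : V) (y : W) {c : SimplexChain R V} {d : SimplexChain R W}
    (hleft : ShuffleLeibniz c (cone y d))
    (hright : ShuffleLeibniz (cone x (degreeInvolution c)) d) :
    ShuffleLeibniz (cone x c) (cone y d) := by
  rw [ShuffleLeibniz] at *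
  simp only [shuffle_cone_cone, boundary_cone, map_add, hleft, hright, LinearMap.sub_apply, map_sub,
    boundary_degreeInvolution, degreeInvolution_cone, degreeInvolution_degreeInvolution,
    LinearMap.neg_apply, map_neg, augmentationProduct_apply, cone_apply_nil,
    degreeInvolution_apply_nil, boundary_single_nil]
  simp only [map_zero, sub_zero, mul_zero, Finsupp.single_zero, sub_neg_eq_add, zero_mul, neg_zero]
  abel

lemma shuffleLeibniz_single (s : List V) (t : List W) :
    ShuffleLeibniz (Finsupp.single s (1 : R)) (Finsupp.single t 1) := by
  induction hn : s.length + t.length generalizing s t with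
  | zero =>
    obtain rfl : s = [] := List.length_eq_zero_iff.1 (by lia)
    simp [ShuffleLeibniz]
  | succ n ih =>
    cases s with
    | nil => simp [ShuffleLeibniz]
    | cons x s =>
      cases t with
      | nil => simp [ShuffleLeibniz]
      | cons y t =>
        rw [← cone_single x, ← cone_single y]
        refine ShuffleLeibniz.cone_cone x y (by simpa using ih s (y :: t) (by simp_all; lia)) ?_
        have hsign : cone x (degreeInvolution (Finsupp.single s (1 : R))) =
            (-1 : R) ^ s.length • Finsupp.single (x :: s) 1 := by simp
        rw [hsign]
        exact (ih (x :: s) t (by simp_all; lia)).smul _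

theorem shuffleLeibniz (c : SimplexChain R V) (d : SimplexChain R W) : ShuffleLeibniz c d := by
  suffices h : shuffle.compr₂ boundary + shuffle.compl₁₂ degreeInvolution boundary =
      shuffle ∘ₗ boundary +
        (augmentationProduct (R := R) (V := V) (W := W)).compl₁₂ boundary boundary by
    rw [ShuffleLeibniz, sub_add_eq_add_sub, eq_sub_iff_add_eq]
    exact LinearMap.congr_fun₂ h c d
  refine Finsupp.lhom_ext' fun s => LinearMap.ext_ring (Finsupp.lhom_ext' fun t =>
    LinearMap.ext_ring ?_)
  have h := shuffleLeibniz_single (R := R) s t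
  rw [ShuffleLeibniz, sub_add_eq_add_sub, eq_sub_iff_add_eq] at h
  exact h

lemma degreeInvolution_mem_supported {S : Set (List V)} {c : SimplexChain R V}
    (hc : c ∈ Finsupp.supported R R S) : degreeInvolution c ∈ Finsupp.supported R R S :=
  linearCombination_mem_of_supported (fun _ hl => Finsupp.single_mem_supported R _ hl) hc

lemma shuffleSimplex_mem_supported (s : List V) (t : List W) :
    shuffleSimplex R s t ∈ Finsupp.supported R R
      {m | m.length + 1 = s.length + t.length ∧ ∀ a ∈ m, a.1 ∈ s ∧ a.2 ∈ t} := by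
  induction hn : s.length + t.length generalizing s t with
  | zero =>
    obtain rfl : s = [] := List.length_eq_zero_iff.1 (by lia)
    simp [shuffleSimplex]
  | succ n ih =>
    cases s with
    | nil => simp [shuffleSimplex]
    | cons x s =>
      cases t with
      | nil => simp [shuffleSimplex]
      | cons y t =>
        have hcons {S : Set (List (V × W))} (hS : ∀ m ∈ S,
            m.length + 1 = s.length + (y :: t).length ∧ ∀ a ∈ m, a.1 ∈ x :: s ∧ a.2 ∈ y :: t)
            {c : SimplexChain R (V × W)} (hc : c ∈ Finsupp.supported R R S) :
            cone (x, y) c ∈ Finsupp.supported R R {m | m.length + 1 =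
              (x :: s).length + (y :: t).length ∧ ∀ a ∈ m, a.1 ∈ x :: s ∧ a.2 ∈ y :: t} := by
          refine cone_mem_supported (fun m hm => ?_) hc
          exact ⟨by simp_all; lia, List.forall_mem_cons.2 ⟨by simp, (hS m hm).2⟩⟩
        rw [← hn, shuffleSimplex, map_add, map_add, map_smul]
        refine add_mem (add_mem ?_ (hcons ?_ (ih s (y :: t) (by simp_all; lia))))
          (Submodule.smul_mem _ _ (hcons ?_ (ih (x :: s) t (by simp_all; lia))))
        · cases s with
          | cons => simp
          | nil =>
            cases t with
            | cons => simp
            | nil =>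
              rw [augmentationProduct_apply]
              exact hcons (S := {[]}) (by simp) (Finsupp.single_mem_supported R _ rfl)
        · exact fun m hm => ⟨by have := hm.1; simp_all; lia,
            fun a ha => ⟨List.mem_cons_of_mem x (hm.2 a ha).1, (hm.2 a ha).2⟩⟩
        · exact fun m hm => ⟨by have := hm.1; simp_all; lia,
            fun a ha => ⟨(hm.2 a ha).1, List.mem_cons_of_mem y (hm.2 a ha).2⟩⟩

lemma shuffle_mem_of_supported {S : Set (List V)} {T : Set (List W)}
    {P : Submodule R (SimplexChain R (V × W))} (h : ∀ s ∈ S, ∀ t ∈ T, shuffleSimplex R s t ∈ P)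
    {c : SimplexChain R V} {d : SimplexChain R W} (hc : c ∈ Finsupp.supported R R S)
    (hd : d ∈ Finsupp.supported R R T) : shuffle c d ∈ P := by
  refine map_mem_of_mem_supported (f := shuffle.flip d) (fun s hs => ?_) hc
  refine map_mem_of_mem_supported (f := shuffle (Finsupp.single s 1)) (fun t ht => ?_) hd
  rw [shuffle_single_single]
  exact h s hs t ht

end ShuffleProduct

section CrossProduct

variable {R : Type*} [CommRing R] {V W : Type*}

/-- The Alexander–Whitney cross product of a `p`-cochain with a cochain of any degree, evaluated on
the front `p`-face and the complementary back face. -/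
def cross (p : ℕ) (f : List V → R) (g : List W → R) (l : List (V × W)) : R :=
  f ((l.take (p + 1)).map Prod.fst) * g ((l.drop p).map Prod.snd)

lemma cross_cons (p : ℕ) (f : List V → R) (g : List W → R) (v : V × W) (l : List (V × W)) :
    cross (p + 1) f g (v :: l) = cross p (fun s => f (v.1 :: s)) g l := by
  simp [cross]

lemma cross_zero_cons (f : List V → R) (g : List W → R) (v : V × W) (l : List (V × W)) :
    cross 0 f g (v :: l) = f [v.1] * g (v.2 :: l.map Prod.snd) := by
  simp [cross]

lemma coboundary_cross_zero (f : List V → R) {g : List W → R} (hg : g [] = 0) (l : List (V × W)) :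
    coboundary (cross 0 f g) l = cross 1 (coboundary f) g l + cross 0 f (coboundary g) l := by
  cases l with
  | nil => simp [cross]
  | cons v l =>
    have hcone : coboundary (fun m => cross 0 f g (v :: m)) l =
        f [v.1] * coboundary (fun m => g (v.2 :: m)) (l.map Prod.snd) := by
      simp only [cross_zero_cons, coboundary_map]
      exact (map_coboundary (AddMonoidHom.mulLeft (f [v.1])) _ _).symm
    rw [coboundary_cons, hcone, cross_cons, cross_zero_cons, coboundary_cons g]
    cases l with
    | nil => simp [cross, hg]
    | cons w l =>
      have hedge : coboundary f [v.1, w.1] = f [w.1] - f [v.1] := by simp [coboundary_cons]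
      simp only [cross, List.take_succ_cons, List.take_zero, List.drop_zero,
        List.map_cons, List.map_nil, hedge]
      ring

lemma coboundary_cross (p : ℕ) (f : List V → R) {g : List W → R} (hg : g [] = 0)
    (l : List (V × W)) :
    coboundary (cross p f g) l =
      cross (p + 1) (coboundary f) g l + (-1) ^ p * cross p f (coboundary g) l := by
  induction p generalizing f l with
  | zero => simpa using coboundary_cross_zero f hg l
  | succ p ih =>
    cases l with
    | nil => simp [cross, hg]
    | cons v l =>
      have hcone : cross (p + 1) (fun s => coboundary f (v.1 :: s)) g l =
          cross (p + 1) f g l - cross (p + 1) (coboundary fun s => f (v.1 :: s)) g l := by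
        simp only [cross, coboundary_cons f, sub_mul]
      simp only [coboundary_cons (cross _ f g), cross_cons, hcone, ih]
      ring

lemma shuffleSimplex_mem_supported_head (x : V) (s : List V) (t : List W) :
    shuffleSimplex R (x :: s) t ∈ Finsupp.supported R R {m | ∃ y l, m = (x, y) :: l} := by
  cases t with
  | nil => simp [shuffleSimplex]
  | cons y t =>
    rw [shuffleSimplex]
    refine cone_mem_supported (S := Set.univ) (fun l _ => ?_)
      (by rw [Finsupp.supported_univ]; exact Submodule.mem_top)
    exact ⟨y, l, rfl⟩

lemma shuffleSimplex_singleton (x : V) (y : W) (t : List W) :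
    shuffleSimplex R [x] (y :: t) = Finsupp.single ((y :: t).map (Prod.mk x)) 1 := by
  induction t generalizing y with
  | nil => simp [shuffleSimplex]
  | cons z t ih => simp [shuffleSimplex, ih]

lemma linearCombination_cross_shuffleSimplex {p : ℕ} {f : List V → R} (g : List W → R)
    (hf : ∀ l, ¬ l.Nodup → f l = 0) {s : List V} {t : List W} (hs : s.length = p + 1)
    (ht : t ≠ []) :
    Finsupp.linearCombination R (cross p f g) (shuffleSimplex R s t) = f s * g t := by
  obtain ⟨y, t, rfl⟩ := List.exists_cons_of_ne_nil ht
  induction p generalizing f s with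
  | zero =>
    obtain ⟨x, rfl⟩ := List.length_eq_one_iff.1 hs
    simp [shuffleSimplex_singleton, cross, Function.comp_def]
  | succ p ih =>
    obtain ⟨x, s, rfl⟩ := List.exists_cons_of_length_eq_add_one hs
    obtain ⟨x', s, rfl⟩ := List.exists_cons_of_length_eq_add_one (Nat.succ_injective hs)
    have hdegenerate : Finsupp.linearCombination R (cross p (fun m => f (x :: m)) g)
        (shuffleSimplex R (x :: x' :: s) t) = 0 := by
      refine linearCombination_eq_zero_of_supported ?_
        (shuffleSimplex_mem_supported_head x (x' :: s) t)
      rintro m ⟨z, l, rfl⟩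
      simp [cross, hf]
    have hrest := ih (f := fun m => f (x :: m)) (fun l hl => hf _ fun h => hl h.of_cons)
      (Nat.succ_injective hs)
    rw [shuffleSimplex, linearCombination_cone]
    simp [cross_cons, hdegenerate, hrest]

theorem linearCombination_cross_shuffle {p : ℕ} {f : List V → R} (g : List W → R)
    (hf : ∀ l, ¬ l.Nodup → f l = 0) {c : SimplexChain R V} {d : SimplexChain R W}
    (hc : c ∈ Finsupp.supported R R {s | s.length = p + 1})
    (hd : d ∈ Finsupp.supported R R {t | t ≠ []}) :
    Finsupp.linearCombination R (cross p f g) (shuffle c d) =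
      Finsupp.linearCombination R f c * Finsupp.linearCombination R g d := by
  refine eqOn_supported (f := Finsupp.linearCombination R (cross p f g) ∘ₗ shuffle.flip d)
    (g := LinearMap.mulRight R (Finsupp.linearCombination R g d) ∘ₗ Finsupp.linearCombination R f)
    (fun s hs => ?_) hc
  have h := eqOn_supported
    (f := Finsupp.linearCombination R (cross p f g) ∘ₗ shuffle (Finsupp.single s 1))
    (g := LinearMap.mulLeft R (f s) ∘ₗ Finsupp.linearCombination R g) (fun t ht => ?_) hd
  · simpa using h
  · simpa [shuffle_single_single] using linearCombination_cross_shuffleSimplex g hf hs ht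

end CrossProduct

section SmallSimplices

variable {M N : Type*} [PseudoMetricSpace M] [PseudoMetricSpace N]

/-- The simplices of diameter less than `ε`. -/
def smallSimplices (M : Type*) [PseudoMetricSpace M] (ε : ℝ) : Set (List M) :=
  {l | ∀ a ∈ l, ∀ b ∈ l, dist a b < ε}

/-- The simplices of diameter less than `ε` whose vertices are `ε`-close to `A`. -/
def smallSimplicesNear (A : Set M) (ε : ℝ) : Set (List M) :=
  smallSimplices M ε ∩ simplicesIn (Metric.thickening ε A)

lemma smallSimplices_mono {δ ε : ℝ} (h : δ ≤ ε) : smallSimplices M δ ⊆ smallSimplices M ε :=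
  fun _ hl a ha b hb => (hl a ha b hb).trans_le h

lemma smallSimplicesNear_mono (A : Set M) {δ ε : ℝ} (h : δ ≤ ε) :
    smallSimplicesNear A δ ⊆ smallSimplicesNear A ε :=
  Set.inter_subset_inter (smallSimplices_mono h)
    (simplicesIn_mono (Metric.thickening_mono h A))

lemma mem_smallSimplices_of_subset {ε : ℝ} {l m : List M} (hl : l ∈ smallSimplices M ε)
    (h : m ⊆ l) : m ∈ smallSimplices M ε :=
  fun a ha b hb => hl a (h ha) b (h hb)

lemma mem_smallSimplicesNear_of_subset {A : Set M} {ε : ℝ} {l m : List M}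
    (hl : l ∈ smallSimplicesNear A ε) (h : m ⊆ l) : m ∈ smallSimplicesNear A ε :=
  ⟨mem_smallSimplices_of_subset hl.1 h, fun a ha => hl.2 a (h ha)⟩

lemma nil_mem_smallSimplicesNear (A : Set M) (ε : ℝ) : [] ∈ smallSimplicesNear A ε :=
  ⟨by simp [smallSimplices], by simp [simplicesIn]⟩

lemma mem_smallSimplices_of_mem_thickening {δ η ε : ℝ} (h : δ + 2 * η ≤ ε) {l m : List M}
    (hl : l ∈ smallSimplices M δ) (hm : m ∈ simplicesIn (Metric.thickening η {a | a ∈ l})) :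
    m ∈ smallSimplices M ε := by
  intro a ha b hb
  obtain ⟨a', ha', haa'⟩ := Metric.mem_thickening_iff.1 (hm a ha)
  obtain ⟨b', hb', hbb'⟩ := Metric.mem_thickening_iff.1 (hm b hb)
  linarith [hl a' ha' b' hb', dist_triangle4_right a b a' b']

lemma mem_smallSimplicesNear_of_mem_thickening {A : Set M} {δ η ε : ℝ} (hη : 0 < η)
    (h : δ + 2 * η ≤ ε) {l m : List M} (hl : l ∈ smallSimplicesNear A δ)
    (hm : m ∈ simplicesIn (Metric.thickening η {a | a ∈ l})) : m ∈ smallSimplicesNear A ε := by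
  refine ⟨mem_smallSimplices_of_mem_thickening h hl.1 hm, fun b hb => ?_⟩
  have hb : b ∈ Metric.thickening (η + δ) A :=
    Metric.thickening_thickening_subset η δ A (Metric.thickening_subset_of_subset η hl.2 (hm b hb))
  exact Metric.thickening_mono (by linarith) A hb

lemma map_mem_smallSimplices {f : M → N} (hf : ∀ x y, dist (f x) (f y) ≤ dist x y) {ε : ℝ}
    {l : List M} (hl : l ∈ smallSimplices M ε) : l.map f ∈ smallSimplices N ε := by
  simp only [smallSimplices, Set.mem_ofPred_eq, List.forall_mem_map] at *
  exact fun a ha b hb => (hf a b).trans_lt (hl a ha b hb)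

end SmallSimplices

section EssentialClasses

variable {R : Type*} [Ring R] {M : Type*} [PseudoMetricSpace M]

/-- Relative cocycles of scale `ε`, in the spirit of Alexander–Spanier cohomology: the cocycle
condition is imposed on simplices of diameter less than `ε`, and the cochain vanishes on those near
`A`. Cochains take values on simplices of all dimensions. -/
structure IsCocycleOfScale (A : Set M) (ε : ℝ) (φ : List M → R) : Prop where
  coboundary_eq_zero : ∀ l ∈ smallSimplices M ε, coboundary φ l = 0
  eq_zero_of_near : ∀ l ∈ smallSimplicesNear A ε, φ l = 0

/-- Relative `q`-cycles of scale `δ`: the `q`-chains of simplices of diameter less than `δ` whose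
boundary lies near `A`. -/
noncomputable def cyclesOfScale (R : Type*) [Ring R] (A : Set M) (q : ℕ) (δ : ℝ) :
    Submodule R (SimplexChain R M) :=
  Finsupp.supported R R (smallSimplices M δ ∩ {l | l.length = q + 1}) ⊓
    (Finsupp.supported R R (smallSimplicesNear A δ)).comap boundary

/-- A cochain is detected in degree `q` if it is nonzero on relative `q`-cycles of arbitrarily small
scale. -/
def IsDetected (A : Set M) (q : ℕ) (φ : List M → R) : Prop :=
  ∀ δ > 0, ∃ z ∈ cyclesOfScale R A q δ, Finsupp.linearCombination R φ z ≠ 0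

/-- `(M, A)` has an essential class in degree `q` if some relative cocycle of positive scale is
detected in degree `q`. -/
def HasEssentialClass (R : Type*) [Ring R] (A : Set M) (q : ℕ) : Prop :=
  ∃ ε > 0, ∃ φ : List M → R, IsCocycleOfScale A ε φ ∧ IsDetected A q φ

lemma cyclesOfScale_mono (A : Set M) (q : ℕ) {δ ε : ℝ} (h : δ ≤ ε) :
    cyclesOfScale R A q δ ≤ cyclesOfScale R A q ε :=
  inf_le_inf (Finsupp.supported_mono (Set.inter_subset_inter_left _ (smallSimplices_mono h)))
    (Submodule.comap_mono (Finsupp.supported_mono (smallSimplicesNear_mono A h)))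

lemma IsCocycleOfScale.mono {A : Set M} {δ ε : ℝ} {φ : List M → R} (hφ : IsCocycleOfScale A ε φ)
    (h : δ ≤ ε) : IsCocycleOfScale A δ φ :=
  ⟨fun l hl => hφ.1 l (smallSimplices_mono h hl),
    fun l hl => hφ.2 l (smallSimplicesNear_mono A h hl)⟩

/-- The chain map `f` is homotopic to the identity through small simplices. -/
lemma IsCocycleOfScale.linearCombination_apply_eq {A : Set M} {q : ℕ} {ε δ η : ℝ}
    {φ : List M → R} (hφ : IsCocycleOfScale A ε φ)
    {f : SimplexChain R M →ₗ[R] SimplexChain R M} (hf : ∀ c, boundary (f c) = f (boundary c))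
    (hnil : f (Finsupp.single [] 1) = Finsupp.single [] 1) (hη : 0 < η)
    (hfC : ∀ l, f (Finsupp.single l 1) ∈
      Finsupp.supported R R (simplicesIn (Metric.thickening η {a | a ∈ l})))
    (h : δ + 2 * η ≤ ε) {z : SimplexChain R M} (hz : z ∈ cyclesOfScale R A q δ) :
    Finsupp.linearCombination R φ (f z) = Finsupp.linearCombination R φ z := by
  have hself (l : List M) : {a | a ∈ l} ⊆ Metric.thickening η {a | a ∈ l} :=
    Metric.self_subset_thickening hη _
  obtain ⟨H, hHC, hH⟩ := exists_homotopy_of_acyclic_carrier hf (g := LinearMap.id) (fun _ => rfl)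
    hnil (C := fun l => Metric.thickening η {a | a ∈ l})
    (fun l m hml => Metric.thickening_subset_of_subset η fun a ha => hml.subset ha)
    (fun x l => ⟨x, hself _ List.mem_cons_self⟩) hfC
    (fun l => Finsupp.single_mem_supported R _ fun a ha => hself l ha)
  have hHz : Finsupp.linearCombination R φ (boundary (H z)) = 0 := by
    rw [linearCombination_boundary]
    refine linearCombination_eq_zero_of_supported hφ.coboundary_eq_zero
      (map_mem_of_mem_supported (fun l hl => ?_) hz.1)
    exact Finsupp.supported_mono (fun m => mem_smallSimplices_of_mem_thickening h hl.1) (hHC l)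
  have hHbz : Finsupp.linearCombination R φ (H (boundary z)) = 0 := by
    refine linearCombination_eq_zero_of_supported hφ.eq_zero_of_near
      (map_mem_of_mem_supported (fun l hl => ?_) hz.2)
    exact Finsupp.supported_mono (fun m => mem_smallSimplicesNear_of_mem_thickening hη h hl) (hHC l)
  rw [← sub_eq_zero, ← map_sub, show f z - z = _ from (hH z).symm, map_add, hHz, hHbz, add_zero]

lemma IsCocycleOfScale.alternate [LinearOrder M] {A : Set M} {ε : ℝ} {φ : List M → R}
    (hφ : IsCocycleOfScale A ε φ) :
    IsCocycleOfScale A ε fun l => Finsupp.linearCombination R φ (alternateSimplex R l) where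
  coboundary_eq_zero l hl := by
    rw [← map_coboundary, ← boundary_alternateSimplex, linearCombination_boundary]
    exact linearCombination_eq_zero_of_supported (fun m hm => hφ.coboundary_eq_zero m
      (mem_smallSimplices_of_subset hl hm.1.subset)) (alternateSimplex_mem_supported l)
  eq_zero_of_near l hl := linearCombination_eq_zero_of_supported (fun m hm =>
    hφ.eq_zero_of_near m (mem_smallSimplicesNear_of_subset hl hm.1.subset))
    (alternateSimplex_mem_supported l)

theorem HasEssentialClass.exists_normalized {A : Set M} {q : ℕ} (h : HasEssentialClass R A q) :
    ∃ ε > 0, ∃ φ : List M → R, IsCocycleOfScale A ε φ ∧ (∀ l, ¬ l.Nodup → φ l = 0) ∧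
      IsDetected A q φ := by
  obtain ⟨ε, hε, φ, hφ, hdet⟩ := h
  classical
  let _ : LinearOrder M := linearOrderOfSTO WellOrderingRel
  refine ⟨ε, hε, _, hφ.alternate, fun l hl => by rw [alternateSimplex_eq_zero hl, map_zero],
    fun δ hδ => ?_⟩
  obtain ⟨z, hz, hne⟩ := hdet (min δ (ε / 2)) (lt_min hδ (half_pos hε))
  refine ⟨z, cyclesOfScale_mono A q (min_le_left _ _) hz, ?_⟩
  have hcomp : Finsupp.linearCombination R
      (fun l => Finsupp.linearCombination R φ (alternateSimplex R l)) z =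
        Finsupp.linearCombination R φ (alternation z) :=
    (Finsupp.apply_linearCombination R _ _ z).symm
  rwa [hcomp, hφ.linearCombination_apply_eq boundary_alternation (alternation_single [])
    (η := ε / 4) (by positivity) (fun l => ?_) (by linarith [min_le_right δ (ε / 2)]) hz]
  rw [alternation_single]
  refine Finsupp.supported_mono (fun m hm b hb => ?_) (alternateSimplex_mem_supported l)
  exact Metric.self_subset_thickening (by positivity) _ (hm.1.mem_iff.1 hb)

end EssentialClasses

section Kunneth

variable {R : Type*} [CommRing R] {M N : Type*} [PseudoMetricSpace M] [PseudoMetricSpace N]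

lemma mem_smallSimplices_prod {ε : ℝ} {s : List M} {t : List N} {m : List (M × N)}
    (hs : s ∈ smallSimplices M ε) (ht : t ∈ smallSimplices N ε)
    (hm : ∀ a ∈ m, a.1 ∈ s ∧ a.2 ∈ t) : m ∈ smallSimplices (M × N) ε :=
  fun a ha b hb => max_lt (hs _ (hm a ha).1 _ (hm b hb).1) (ht _ (hm a ha).2 _ (hm b hb).2)

lemma thickening_preimage_fst {ε : ℝ} (hε : 0 < ε) (A : Set M) :
    Metric.thickening ε (Prod.fst ⁻¹' A : Set (M × N)) = Prod.fst ⁻¹' Metric.thickening ε A := by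
  ext x
  simp only [Set.mem_preimage, Metric.mem_thickening_iff, Prod.dist_eq, max_lt_iff]
  exact ⟨fun ⟨a, ha, h⟩ => ⟨a.1, ha, h.1⟩, fun ⟨a, ha, h⟩ => ⟨(a, x.2), ha, h, by simpa⟩⟩

lemma thickening_preimage_snd {ε : ℝ} (hε : 0 < ε) (B : Set N) :
    Metric.thickening ε (Prod.snd ⁻¹' B : Set (M × N)) = Prod.snd ⁻¹' Metric.thickening ε B := by
  ext x
  simp only [Set.mem_preimage, Metric.mem_thickening_iff, Prod.dist_eq, max_lt_iff]
  exact ⟨fun ⟨a, ha, h⟩ => ⟨a.2, ha, h.2⟩, fun ⟨a, ha, h⟩ => ⟨(x.1, a), ha, by simpa, h⟩⟩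

lemma map_fst_mem_smallSimplices {ε : ℝ} {l : List (M × N)} (hl : l ∈ smallSimplices (M × N) ε) :
    l.map Prod.fst ∈ smallSimplices M ε :=
  map_mem_smallSimplices (fun _ _ => le_max_left _ _) hl

lemma map_snd_mem_smallSimplices {ε : ℝ} {l : List (M × N)} (hl : l ∈ smallSimplices (M × N) ε) :
    l.map Prod.snd ∈ smallSimplices N ε :=
  map_mem_smallSimplices (fun _ _ => le_max_right _ _) hl

/-- The subset `(A × N) ∪ (M × B)` appearing in relative Künneth formulas. -/
abbrev prodUnion (A : Set M) (B : Set N) : Set (M × N) := Prod.fst ⁻¹' A ∪ Prod.snd ⁻¹' B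

lemma cons_mem_smallSimplicesNear {A : Set M} {ε : ℝ} (hε : 0 < ε) {x : M} {l : List M}
    (hl : x :: l ∈ smallSimplices M ε) (hx : x ∈ Metric.thickening ε A) :
    x :: l ∈ smallSimplicesNear A (2 * ε) := by
  refine ⟨smallSimplices_mono (by linarith) hl, fun a ha => ?_⟩
  obtain ⟨c, hc, hxc⟩ := Metric.mem_thickening_iff.1 hx
  have hax := hl a ha x List.mem_cons_self
  exact Metric.mem_thickening_iff.2 ⟨c, hc, by linarith [dist_triangle a x c]⟩

lemma map_near_of_mem_smallSimplicesNear_prodUnion {A : Set M} {B : Set N} {ε : ℝ} (hε : 0 < ε)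
    {l : List (M × N)} (hl : l ∈ smallSimplicesNear (prodUnion A B) ε) :
    l.map Prod.fst ∈ smallSimplicesNear A (2 * ε) ∨
      l.map Prod.snd ∈ smallSimplicesNear B (2 * ε) := by
  cases l with
  | nil => exact .inl (nil_mem_smallSimplicesNear A _)
  | cons v l =>
    have hfst := map_fst_mem_smallSimplices hl.1
    have hsnd := map_snd_mem_smallSimplices hl.1
    have hv := hl.2 v List.mem_cons_self
    rw [Metric.thickening_union, thickening_preimage_fst hε, thickening_preimage_snd hε] at hv
    rcases hv with hv | hv
    · exact .inl (cons_mem_smallSimplicesNear hε hfst hv)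
    · exact .inr (cons_mem_smallSimplicesNear hε hsnd hv)

lemma IsCocycleOfScale.cross {A : Set M} {B : Set N} {ε : ℝ} (hε : 0 < ε) {f : List M → R}
    {g : List N → R} (hf : IsCocycleOfScale A ε f) (hg : IsCocycleOfScale B ε g) (p : ℕ) :
    IsCocycleOfScale (prodUnion A B) (ε / 2) (cross p f g) where
  coboundary_eq_zero l hl := by
    have hl := smallSimplices_mono (half_le_self hε.le) hl
    have hfront := mem_smallSimplices_of_subset (map_fst_mem_smallSimplices hl)
      (List.map_subset _ (List.take_subset (p + 2) l))
    have hback := mem_smallSimplices_of_subset (map_snd_mem_smallSimplices hl)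
      (List.map_subset _ (List.drop_subset p l))
    rw [coboundary_cross p f (hg.eq_zero_of_near _ (nil_mem_smallSimplicesNear B ε))]
    simp only [MeanDimPaper.cross, hf.coboundary_eq_zero _ hfront, hg.coboundary_eq_zero _ hback,
      zero_mul, mul_zero, add_zero]
  eq_zero_of_near l hl := by
    have hl := map_near_of_mem_smallSimplicesNear_prodUnion (half_pos hε) hl
    rw [mul_div_cancel₀ ε two_ne_zero] at hl
    rw [MeanDimPaper.cross]
    rcases hl with hl | hl
    · rw [hf.eq_zero_of_near _ (mem_smallSimplicesNear_of_subset hl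
        (List.map_subset _ (List.take_subset _ l))), zero_mul]
    · rw [hg.eq_zero_of_near _ (mem_smallSimplicesNear_of_subset hl
        (List.map_subset _ (List.drop_subset _ l))), mul_zero]

lemma shuffle_mem_supported_smallSimplicesNear_left {A : Set M} (B : Set N) {δ : ℝ} (hδ : 0 < δ)
    {c : SimplexChain R M} {d : SimplexChain R N}
    (hc : c ∈ Finsupp.supported R R (smallSimplicesNear A δ))
    (hd : d ∈ Finsupp.supported R R (smallSimplices N δ)) :
    shuffle c d ∈ Finsupp.supported R R (smallSimplicesNear (prodUnion A B) δ) := by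
  refine shuffle_mem_of_supported (fun s hs t ht => ?_) hc hd
  refine Finsupp.supported_mono (fun m hm => ?_) (shuffleSimplex_mem_supported s t)
  refine ⟨mem_smallSimplices_prod hs.1 ht hm.2, fun a ha => ?_⟩
  rw [Metric.thickening_union, thickening_preimage_fst hδ]
  exact .inl (hs.2 _ (hm.2 a ha).1)

lemma shuffle_mem_supported_smallSimplicesNear_right (A : Set M) {B : Set N} {δ : ℝ} (hδ : 0 < δ)
    {c : SimplexChain R M} {d : SimplexChain R N}
    (hc : c ∈ Finsupp.supported R R (smallSimplices M δ))
    (hd : d ∈ Finsupp.supported R R (smallSimplicesNear B δ)) :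
    shuffle c d ∈ Finsupp.supported R R (smallSimplicesNear (prodUnion A B) δ) := by
  refine shuffle_mem_of_supported (fun s hs t ht => ?_) hc hd
  refine Finsupp.supported_mono (fun m hm => ?_) (shuffleSimplex_mem_supported s t)
  refine ⟨mem_smallSimplices_prod hs ht.1 hm.2, fun a ha => ?_⟩
  rw [Metric.thickening_union, thickening_preimage_snd hδ]
  exact .inr (ht.2 _ (hm.2 a ha).2)

lemma shuffle_mem_cyclesOfScale {A : Set M} {B : Set N} {p q : ℕ} {δ : ℝ} (hδ : 0 < δ)
    {z : SimplexChain R M} {w : SimplexChain R N} (hz : z ∈ cyclesOfScale R A p δ)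
    (hw : w ∈ cyclesOfScale R B q δ) :
    shuffle z w ∈ cyclesOfScale R (prodUnion A B) (p + q) δ := by
  refine ⟨shuffle_mem_of_supported (fun s hs t ht => ?_) hz.1 hw.1, ?_⟩
  · refine Finsupp.supported_mono (fun m hm => ?_) (shuffleSimplex_mem_supported s t)
    refine ⟨mem_smallSimplices_prod hs.1 ht.1 hm.2, ?_⟩
    have hlen : s.length = p + 1 ∧ t.length = q + 1 := ⟨hs.2, ht.2⟩
    have := hm.1
    change m.length = p + q + 1
    lia
  · rw [SetLike.mem_coe, Submodule.mem_comap, shuffleLeibniz z w]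
    refine add_mem (sub_mem ?_ ?_) ?_
    · exact shuffle_mem_supported_smallSimplicesNear_left B hδ hz.2
        (Finsupp.supported_mono (fun _ h => h.1) hw.1)
    · exact shuffle_mem_supported_smallSimplicesNear_right A hδ (degreeInvolution_mem_supported
        (Finsupp.supported_mono (fun _ h => h.1) hz.1)) hw.2
    · exact Finsupp.single_mem_supported R _ (nil_mem_smallSimplicesNear _ _)

/-- The cross product of the two classes is detected by shuffle products of cycles. -/
theorem HasEssentialClass.prod [NoZeroDivisors R] {A : Set M} {B : Set N} {p q : ℕ}
    (hA : HasEssentialClass R A p) (hB : HasEssentialClass R B q) :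
    HasEssentialClass R (prodUnion A B) (p + q) := by
  obtain ⟨ε₁, hε₁, f, hf, hnormalized, hfdet⟩ := hA.exists_normalized
  obtain ⟨ε₂, hε₂, g, hg, hgdet⟩ := hB
  have hε : 0 < min ε₁ ε₂ := lt_min hε₁ hε₂
  refine ⟨min ε₁ ε₂ / 2, half_pos hε, cross p f g,
    (hf.mono (min_le_left _ _)).cross hε (hg.mono (min_le_right _ _)) p, fun δ hδ => ?_⟩
  obtain ⟨z, hz, hfz⟩ := hfdet δ hδ
  obtain ⟨w, hw, hgw⟩ := hgdet δ hδ
  refine ⟨shuffle z w, shuffle_mem_cyclesOfScale hδ hz hw, ?_⟩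
  rw [linearCombination_cross_shuffle g hnormalized
    (Finsupp.supported_mono (fun _ hs => hs.2) hz.1)
    (Finsupp.supported_mono (fun t ht => ?_) hw.1)]
  · exact mul_ne_zero hfz hgw
  · exact List.ne_nil_of_length_eq_add_one ht.2

end Kunneth

section CoveringDimension

lemma ord_le_iff {Z : Type*} {β : Set (Set Z)} {n : ℕ} :
    ord β ≤ n ↔
      ∀ x, ∀ s : Finset (Set Z), ↑s ⊆ β → (∀ U ∈ s, x ∈ U) → s.card ≤ n + 1 := by
  simp only [ord, iSup₂_le_iff, Set.mem_ofPred_eq, Nat.cast_le]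
  constructor
  · intro h x s hsβ hx
    rcases hcard : s.card with _ | k
    · exact Nat.zero_le _
    · let e := s.equivFinOfCardEq hcard
      exact Nat.succ_le_succ (h k ⟨fun i => e.symm i, Subtype.val_injective.comp e.symm.injective,
        fun i => hsβ (e.symm i).2, x, Set.mem_iInter.2 fun i => hx _ (e.symm i).2⟩)
  · classical
    rintro h k ⟨f, hf, hfβ, x, hx⟩
    have hcard := h x (Finset.univ.image f) (by simpa [Set.subset_def] using hfβ)
      (by simpa using Set.mem_iInter.1 hx)
    rw [Finset.card_image_of_injective _ hf, Finset.card_fin] at hcard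
    exact Nat.le_of_succ_le_succ hcard

lemma topDim_le_iff {n : ℕ} :
    topDim X ≤ n ↔ ∀ α : Set (Set X), IsOpenCover α →
      ∃ β, IsOpenCover β ∧ Refines β α ∧ ord β ≤ n := by
  simp only [topDim, iSup₂_le_iff, Set.mem_ofPred_eq]
  refine forall₂_congr fun α _ => ⟨fun h => ?_, fun ⟨β, hβ, hβα, hord⟩ => ?_⟩
  · have hlt : covD α < n + 1 := ENat.lt_add_one_iff (ENat.natCast_ne_top n) |>.2 h
    simp only [covD, iInf_lt_iff] at hlt
    obtain ⟨β, ⟨hβ, hβα⟩, hord⟩ := hlt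
    exact ⟨β, hβ, hβα, Order.le_of_lt_add_one hord⟩
  · exact (iInf₂_le β ⟨hβ, hβα⟩).trans hord

variable {Y : Type*} [TopologicalSpace Y]

lemma IsOpenCover.preimage {α : Set (Set Y)} (hα : IsOpenCover α) {f : X → Y}
    (hf : Continuous f) : IsOpenCover (Set.preimage f '' α) := by
  refine ⟨Set.forall_mem_image.2 fun U hU => (hα.1 U hU).preimage hf, ?_⟩
  rw [Set.sUnion_image, ← Set.preimage_iUnion₂, ← Set.sUnion_eq_biUnion, hα.2, Set.preimage_univ]

lemma topDim_le_of_homeomorph (e : X ≃ₜ Y) : topDim Y ≤ topDim X := by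
  classical
  rcases eq_or_ne (topDim X) ⊤ with htop | htop
  · exact htop ▸ le_top
  obtain ⟨n, hn⟩ := ENat.ne_top_iff_exists.1 htop
  rw [← hn, topDim_le_iff]
  intro α hα
  obtain ⟨β, hβ, hβα, hord⟩ := topDim_le_iff.1 hn.ge _ (hα.preimage e.continuous)
  refine ⟨_, hβ.preimage e.symm.continuous, Set.forall_mem_image.2 fun V hV => ?_, ?_⟩
  · obtain ⟨_, ⟨U, hU, rfl⟩, hVU⟩ := hβα V hV
    exact ⟨U, hU, fun y hy => by simpa using hVU hy⟩
  · rw [ord_le_iff] at hord ⊢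
    intro y s hs hy
    obtain ⟨t, ht, rfl⟩ := Finset.subset_set_image_iff.1 hs
    exact Finset.card_image_le.trans
      (hord (e.symm y) t ht fun V hV => hy _ (Finset.mem_image_of_mem _ hV))

lemma topDim_congr (e : X ≃ₜ Y) : topDim X = topDim Y :=
  (topDim_le_of_homeomorph e.symm).antisymm (topDim_le_of_homeomorph e)

end CoveringDimension

section MetricCovers

variable {M : Type*} [PseudoMetricSpace M]

lemma isOpenCover_range_ball {r : ℝ} (hr : 0 < r) :
    IsOpenCover (Set.range fun x : M => Metric.ball x r) :=
  ⟨Set.forall_mem_range.2 fun _ => Metric.isOpen_ball,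
    Set.eq_univ_of_forall fun x => ⟨_, ⟨x, rfl⟩, Metric.mem_ball_self hr⟩⟩

lemma IsOpenCover.exists_ball_subset [CompactSpace M] {α : Set (Set M)} (hα : IsOpenCover α) :
    ∃ r > 0, ∃ u : M → Set M, ∀ x, u x ∈ α ∧ Metric.ball x r ⊆ u x := by
  obtain ⟨r, hr, h⟩ := lebesgue_number_lemma_of_metric_sUnion isCompact_univ hα.1 hα.2.ge
  choose u hu using fun x => h x (Set.mem_univ x)
  exact ⟨r, hr, u, hu⟩

end MetricCovers

section LevelCells

variable {Z ι : Type*}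

/-- The points at which some level `t ∈ (0, 1)` separates the values of the functions in `S` from
those of the other functions. -/
def levelCell (h : ι → Z → ℝ) (S : Finset ι) : Set Z :=
  {p | ∃ t ∈ Set.Ioo (0 : ℝ) 1, (∀ i ∈ S, t < h i p) ∧ ∀ i ∉ S, h i p < t}

/-- The cover by nonempty level cells. -/
def levelCells (h : ι → Z → ℝ) : Set (Set Z) :=
  {w | w.Nonempty ∧ ∃ S, levelCell h S = w}

lemma pos_of_mem_levelCell {h : ι → Z → ℝ} {S : Finset ι} {p : Z} (hp : p ∈ levelCell h S) {i : ι}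
    (hi : i ∈ S) : 0 < h i p := by
  obtain ⟨t, ht, hS, -⟩ := hp
  exact ht.1.trans (hS i hi)

lemma mem_of_mem_levelCell {h : ι → Z → ℝ} {S : Finset ι} {p : Z} (hp : p ∈ levelCell h S) {i : ι}
    (hi : h i p = 1) : i ∈ S := by
  obtain ⟨t, ht, -, hS⟩ := hp
  exact by_contra fun hiS => (ht.2.trans_eq hi.symm).not_gt (hS i hiS)

lemma isOpen_levelCell [TopologicalSpace Z] [Finite ι] {h : ι → Z → ℝ}
    (hh : ∀ i, Continuous (h i)) (S : Finset ι) : IsOpen (levelCell h S) := by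
  have hcell : levelCell h S = ⋃ t ∈ Set.Ioo (0 : ℝ) 1,
      (⋂ i ∈ S, {p | t < h i p}) ∩ ⋂ i ∈ (S : Set ι)ᶜ, {p | h i p < t} := by
    ext p
    simp only [levelCell, Set.mem_ofPred_eq, Set.mem_iUnion₂, Set.mem_inter_iff, Set.mem_iInter₂,
      Set.mem_compl_iff, Finset.mem_coe, exists_prop]
  rw [hcell]
  exact isOpen_biUnion fun t _ =>
    (isOpen_biInter_finset fun i _ => isOpen_lt continuous_const (hh i)).inter
      ((Set.toFinite _).isOpen_biInter fun i _ => isOpen_lt (hh i) continuous_const)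

lemma exists_mem_levelCell [Finite ι] (h : ι → Z → ℝ) (p : Z) : ∃ S, p ∈ levelCell h S := by
  classical
  have := Fintype.ofFinite ι
  obtain ⟨t, ht, hne⟩ := (Set.Ioo_infinite (zero_lt_one' ℝ)).exists_notMem_finset
    (Finset.univ.image fun i => h i p)
  refine ⟨Finset.univ.filter fun i => t < h i p, t, ht, by simp, fun i hi => ?_⟩
  have hle : h i p ≤ t := by simpa using hi
  exact hle.lt_of_ne fun heq => hne (heq ▸ Finset.mem_image_of_mem _ (Finset.mem_univ i))

lemma isOpenCover_levelCells [TopologicalSpace Z] [Finite ι] {h : ι → Z → ℝ}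
    (hh : ∀ i, Continuous (h i)) : IsOpenCover (levelCells h) := by
  refine ⟨?_, Set.eq_univ_of_forall fun p => ?_⟩
  · rintro _ ⟨-, S, rfl⟩
    exact isOpen_levelCell hh S
  · obtain ⟨S, hS⟩ := exists_mem_levelCell h p
    exact ⟨_, ⟨⟨p, hS⟩, S, rfl⟩, hS⟩

lemma subset_or_subset_of_mem_levelCell {h : ι → Z → ℝ} {S T : Finset ι} {p : Z}
    (hS : p ∈ levelCell h S) (hT : p ∈ levelCell h T) : S ⊆ T ∨ T ⊆ S := by
  obtain ⟨s, -, hs, hs'⟩ := hS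
  obtain ⟨t, -, ht, ht'⟩ := hT
  rcases le_total s t with hst | hts
  · exact .inr fun i hi => by_contra fun hiS => ((ht i hi).trans (hs' i hiS)).not_ge hst
  · exact .inl fun i hi => by_contra fun hiT => ((hs i hi).trans (ht' i hiT)).not_ge hts

/-- The index sets of the cells containing a point form a chain, so they are told apart by their
cardinalities. -/
lemma ord_levelCells_le {h : ι → Z → ℝ} {a n : ℕ}
    (hcard : ∀ S, ∀ p ∈ levelCell h S, a ≤ S.card ∧ S.card ≤ a + n) : ord (levelCells h) ≤ n := by
  classical
  rw [ord_le_iff]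
  intro p s hs hp
  have hrange : ↑s ⊆ levelCell h '' Set.univ := fun w hw => by
    obtain ⟨-, S, rfl⟩ := hs hw
    exact ⟨S, trivial, rfl⟩
  obtain ⟨T, -, rfl⟩ := Finset.subset_set_image_iff.1 hrange
  have hmem (S) (hS : S ∈ T) : p ∈ levelCell h S := hp _ (Finset.mem_image_of_mem _ hS)
  have hinj : Set.InjOn Finset.card (T : Set (Finset ι)) := fun S hS S' hS' heq => by
    rcases subset_or_subset_of_mem_levelCell (hmem S hS) (hmem S' hS') with hsub | hsub
    · exact Finset.eq_of_subset_of_card_le hsub heq.ge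
    · exact (Finset.eq_of_subset_of_card_le hsub heq.le).symm
  have hle : T.card ≤ (Finset.Icc a (a + n)).card := Finset.card_le_card_of_injOn _
    (fun S hS => Finset.mem_Icc.2 (hcard S p (hmem S hS))) hinj
  rw [Nat.card_Icc] at hle
  have himage := Finset.card_image_le (s := T) (f := levelCell h)
  lia

end LevelCells

section ProductDimension

variable {ι κ : Type*}

/-- A family of continuous functions subordinate to the cover `α`, of multiplicity at most `m + 1`,
and normalized by attaining the value `1` at every point. -/
structure IsSubordinate (α : Set (Set X)) (m : ℕ) (f : ι → C(X, ℝ)) : Prop where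
  pos_subset : ∀ i, ∃ U ∈ α, {x | 0 < f i x} ⊆ U
  exists_eq_one : ∀ x, ∃ i, f i x = 1
  card_le : ∀ x, ∀ s : Finset ι, (∀ i ∈ s, 0 < f i x) → s.card ≤ m + 1

lemma exists_isSubordinate [CompactSpace X] [NormalSpace X] {m : ℕ} (h : topDim X ≤ m)
    {α : Set (Set X)} (hα : IsOpenCover α) :
    ∃ (t : Set (Set X)) (_ : t.Finite) (f : t → C(X, ℝ)), IsSubordinate α m f := by
  classical
  obtain ⟨β, hβ, hβα, hord⟩ := topDim_le_iff.1 h α hα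
  obtain ⟨t, htβ, ht, hcover⟩ := isCompact_univ.elim_finite_subcover_image hβ.1
    (hβ.2.ge.trans Set.sUnion_eq_biUnion.le)
  have := ht.to_subtype
  have hopen (U : t) : IsOpen (U : Set X) := hβ.1 _ (htβ U.2)
  obtain ⟨v, hv, hvclosed, hvU⟩ := exists_subset_iUnion_closed_subset isClosed_univ hopen
    (fun _ _ => Set.toFinite _) (hcover.trans (Set.biUnion_eq_iUnion t _).le)
  choose f hf₀ hf₁ _ using fun U : t => exists_continuous_zero_one_of_isClosed
    (hopen U).isClosed_compl (hvclosed U) (Set.disjoint_compl_left_iff_subset.2 (hvU U))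
  have hpos (U : t) : {x | 0 < f U x} ⊆ U := fun x hx => by
    by_contra hxU
    exact hx.ne' (hf₀ U hxU)
  refine ⟨t, ht, f, fun U => ?_, fun x => ?_, fun x s hs => ?_⟩
  · obtain ⟨V, hV, hUV⟩ := hβα U (htβ U.2)
    exact ⟨V, hV, (hpos U).trans hUV⟩
  · obtain ⟨U, hU⟩ := Set.mem_iUnion.1 (hv (Set.mem_univ x))
    exact ⟨U, hf₁ U hU⟩
  · rw [← Finset.card_map (Function.Embedding.subtype (· ∈ t))]
    refine ord_le_iff.1 hord x _ (fun V hV => ?_) fun V hV => ?_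
    all_goals obtain ⟨U, hU, rfl⟩ := Finset.mem_map.1 hV
    · exact htβ U.2
    · exact hpos U (hs U hU)

lemma nonempty_and_card_le_of_mem_levelCell {Y : Type*} [TopologicalSpace Y]
    {α : Set (Set X)} {β : Set (Set Y)} {m n : ℕ} {f : ι → C(X, ℝ)} {g : κ → C(Y, ℝ)}
    (hf : IsSubordinate α m f) (hg : IsSubordinate β n g) {S : Finset (ι ⊕ κ)} {p : X × Y}
    (hp : p ∈ levelCell (Sum.elim (fun i p => f i p.1) fun j p => g j p.2) S) :
    S.toLeft.Nonempty ∧ S.toRight.Nonempty ∧ S.card ≤ 2 + (m + n) := by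
  have hleft : S.toLeft.card ≤ m + 1 := hf.card_le p.1 _ fun i hi =>
    pos_of_mem_levelCell hp (Finset.mem_toLeft.1 hi)
  have hright : S.toRight.card ≤ n + 1 := hg.card_le p.2 _ fun j hj =>
    pos_of_mem_levelCell hp (Finset.mem_toRight.1 hj)
  obtain ⟨i, hi⟩ := hf.exists_eq_one p.1
  obtain ⟨j, hj⟩ := hg.exists_eq_one p.2
  refine ⟨⟨i, Finset.mem_toLeft.2 (mem_of_mem_levelCell hp hi)⟩,
    ⟨j, Finset.mem_toRight.2 (mem_of_mem_levelCell hp hj)⟩, ?_⟩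
  have hsum := S.card_toLeft_add_card_toRight
  lia

theorem topDim_prod_le {M N : Type*} [PseudoMetricSpace M] [CompactSpace M] [PseudoMetricSpace N]
    [CompactSpace N] : topDim (M × N) ≤ topDim M + topDim N := by
  rcases eq_or_ne (topDim M) ⊤ with hM | hM
  · simp [hM]
  rcases eq_or_ne (topDim N) ⊤ with hN | hN
  · simp [hN]
  obtain ⟨m, hm⟩ := ENat.ne_top_iff_exists.1 hM
  obtain ⟨n, hn⟩ := ENat.ne_top_iff_exists.1 hN
  rw [← hm, ← hn, ← Nat.cast_add, topDim_le_iff]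
  intro α hα
  obtain ⟨r, hr, u, hu⟩ := hα.exists_ball_subset
  obtain ⟨s, hs, f, hf⟩ := exists_isSubordinate hm.ge (isOpenCover_range_ball (M := M) hr)
  obtain ⟨t, ht, g, hg⟩ := exists_isSubordinate hn.ge (isOpenCover_range_ball (M := N) hr)
  have := hs.to_subtype
  have := ht.to_subtype
  let h : s ⊕ t → M × N → ℝ := Sum.elim (fun i p => f i p.1) fun j p => g j p.2
  refine ⟨levelCells h, isOpenCover_levelCells ?_, ?_, ord_levelCells_le (a := 2) fun S p hp => ?_⟩
  · rintro (i | j)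
    exacts [(f i).continuous.comp continuous_fst, (g j).continuous.comp continuous_snd]
  · rintro _ ⟨⟨p, hp⟩, S, rfl⟩
    obtain ⟨⟨i, hi⟩, ⟨j, hj⟩, -⟩ := nonempty_and_card_le_of_mem_levelCell hf hg hp
    obtain ⟨_, ⟨x, rfl⟩, hx⟩ := hf.pos_subset i
    obtain ⟨_, ⟨y, rfl⟩, hy⟩ := hg.pos_subset j
    refine ⟨_, (hu (x, y)).1, fun p' hp' => (hu (x, y)).2 ?_⟩
    rw [← ball_prod_same]
    exact ⟨hx (pos_of_mem_levelCell hp' (Finset.mem_toLeft.1 hi)),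
      hy (pos_of_mem_levelCell hp' (Finset.mem_toRight.1 hj))⟩
  · obtain ⟨hleft, hright, hcard⟩ := nonempty_and_card_le_of_mem_levelCell hf hg hp
    have hsum := S.card_toLeft_add_card_toRight
    have hpos := And.intro hleft.card_pos hright.card_pos
    lia

end ProductDimension

section LowerBound

variable {R : Type*} [Ring R] {M N : Type*} [PseudoMetricSpace M] [PseudoMetricSpace N]

/-- The map `f` identifies the points for which the same member of a fine cover of order at most
`n` is chosen. -/
lemma exists_map_nodup_length_le [CompactSpace M] {n : ℕ} (h : topDim M ≤ n) {η : ℝ} (hη : 0 < η) :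
    ∃ f : M → M, (∀ x, dist (f x) x < η) ∧
      ∃ r > 0, ∀ l ∈ smallSimplices M r, (l.map f).Nodup → l.length ≤ n + 1 := by
  classical
  obtain ⟨β, hβ, hβα, hord⟩ := topDim_le_iff.1 h _ (isOpenCover_range_ball (half_pos hη))
  obtain ⟨r, hr, u, hu⟩ := hβ.exists_ball_subset
  have hself (x : M) : x ∈ u x := (hu x).2 (Metric.mem_ball_self hr)
  let select : Set.range u → M := Function.surjInv Set.rangeFactorization_surjective
  let f (x : M) : M := select (Set.rangeFactorization u x)
  have hf (x : M) : u (f x) = u x :=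
    congrArg Subtype.val (Function.surjInv_eq Set.rangeFactorization_surjective _)
  refine ⟨f, fun x => ?_, r, hr, fun l hl hnodup => ?_⟩
  · obtain ⟨_, ⟨y, rfl⟩, hy⟩ := hβα _ (hu x).1
    have hfx : dist (f x) y < η / 2 := hy (hf x ▸ hself (f x))
    have hx : dist x y < η / 2 := hy (hself x)
    linarith [dist_triangle_right (f x) x y]
  · rcases l with _ | ⟨x, l⟩
    · exact Nat.zero_le _
    have hnodup' : ((x :: l).map u).Nodup := by
      rw [List.Nodup, List.pairwise_map] at hnodup ⊢
      exact hnodup.imp fun hne heq => hne (congrArg select (Subtype.ext heq))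
    rw [← List.length_map u, ← List.toFinset_card_of_nodup hnodup']
    refine ord_le_iff.1 hord x _ (fun U hU => ?_) fun U hU => ?_
    all_goals obtain ⟨y, hy, rfl⟩ := List.mem_map.1 (List.mem_toFinset.1 hU)
    · exact (hu y).1
    · exact (hu y).2 (hl x List.mem_cons_self y hy)

theorem HasEssentialClass.le_topDim [CompactSpace M] {A : Set M} {q : ℕ}
    (h : HasEssentialClass R A q) : (q : ℕ∞) ≤ topDim M := by
  by_contra! hlt
  obtain ⟨n, hn⟩ := ENat.ne_top_iff_exists.1 hlt.ne_top
  rw [← hn, Nat.cast_lt] at hlt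
  obtain ⟨ε, hε, φ, hφ, hnormalized, hdet⟩ := h.exists_normalized
  obtain ⟨f, hf, r, hr, hlength⟩ := exists_map_nodup_length_le hn.ge (by positivity : 0 < ε / 4)
  obtain ⟨z, hz, hne⟩ := hdet (min r (ε / 2)) (lt_min hr (half_pos hε))
  refine hne ?_
  rw [← hφ.linearCombination_apply_eq (boundary_mapVertices f) (mapVertices_single f [] 1)
    (η := ε / 4) (by positivity) (fun l => ?_) (by linarith [min_le_right r (ε / 2)]) hz,
    linearCombination_mapVertices]
  · refine linearCombination_eq_zero_of_supported (fun l hl => hnormalized _ fun hnodup => ?_) hz.1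
    have hle := hlength l (smallSimplices_mono (min_le_left _ _) hl.1) hnodup
    have hlen : l.length = q + 1 := hl.2
    lia
  · rw [mapVertices_single]
    refine Finsupp.single_mem_supported R _ fun b hb => ?_
    obtain ⟨a, ha, rfl⟩ := List.mem_map.1 hb
    exact Metric.mem_thickening_iff.2 ⟨a, ha, hf a⟩

lemma map_mem_smallSimplicesNear (e : M ≃ᵢ N) {B : Set N} {ε : ℝ} {l : List M}
    (hl : l ∈ smallSimplicesNear (e ⁻¹' B) ε) : l.map e ∈ smallSimplicesNear B ε := by
  refine ⟨map_mem_smallSimplices (fun x y => (e.dist_eq x y).le) hl.1, fun b hb => ?_⟩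
  obtain ⟨a, ha, rfl⟩ := List.mem_map.1 hb
  obtain ⟨c, hc, hac⟩ := Metric.mem_thickening_iff.1 (hl.2 a ha)
  exact Metric.mem_thickening_iff.2 ⟨e c, hc, by rwa [e.dist_eq]⟩

lemma mapVertices_mem_cyclesOfScale (e : M ≃ᵢ N) {B : Set N} {q : ℕ} {δ : ℝ}
    {z : SimplexChain R M} (hz : z ∈ cyclesOfScale R (e ⁻¹' B) q δ) :
    mapVertices e z ∈ cyclesOfScale R B q δ := by
  refine ⟨map_mem_of_mem_supported (fun l hl => ?_) hz.1, ?_⟩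
  · rw [mapVertices_single]
    exact Finsupp.single_mem_supported R _
      ⟨map_mem_smallSimplices (fun x y => (e.dist_eq x y).le) hl.1, by simpa using hl.2⟩
  · rw [SetLike.mem_coe, Submodule.mem_comap, boundary_mapVertices]
    refine map_mem_of_mem_supported (fun l hl => ?_) hz.2
    rw [mapVertices_single]
    exact Finsupp.single_mem_supported R _ (map_mem_smallSimplicesNear e hl)

lemma HasEssentialClass.preimage {B : Set N} {q : ℕ} (h : HasEssentialClass R B q) (e : M ≃ᵢ N) :
    HasEssentialClass R (e ⁻¹' B) q := by
  obtain ⟨ε, hε, φ, hφ, hdet⟩ := h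
  refine ⟨ε, hε, fun l => φ (l.map e), ⟨fun l hl => ?_, fun l hl => ?_⟩, fun δ hδ => ?_⟩
  · rw [← coboundary_map]
    exact hφ.coboundary_eq_zero _ (map_mem_smallSimplices (fun x y => (e.dist_eq x y).le) hl)
  · exact hφ.eq_zero_of_near _ (map_mem_smallSimplicesNear e hl)
  · obtain ⟨z, hz, hne⟩ := hdet δ hδ
    refine ⟨mapVertices e.symm z, mapVertices_mem_cyclesOfScale e.symm ?_, ?_⟩
    · rwa [← Set.preimage_comp, e.self_comp_symm, Set.preimage_id]
    · simpa [linearCombination_mapVertices, e.self_comp_symm] using hne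

end LowerBound

section Powers

variable {R : Type*} [CommRing R] [NoZeroDivisors R] {M : Type*} [PseudoMetricSpace M]

theorem HasEssentialClass.exists_pi {A : Set M} {q n : ℕ} (h : HasEssentialClass R A q)
    (hn : 1 ≤ n) : ∃ B : Set (Fin n → M), HasEssentialClass R B (n * q) := by
  induction n, hn using Nat.le_induction with
  | base => exact ⟨_, one_mul q ▸ h.preimage (IsometryEquiv.funUnique (Fin 1) M)⟩
  | succ n _ ih =>
    obtain ⟨B, hB⟩ := ih
    have hfirst := h.preimage (IsometryEquiv.funUnique (Fin 1) M)
    exact ⟨_, Nat.succ_mul n q ▸ (hB.prod hfirst).preimage (Fin.appendIsometry n 1).symm⟩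

end Powers

section NerveCochains

variable {Y : Type*} {α : Set (Set Y)} {q : ℕ} {G : Type*} [AddCommGroup G]

/-- Extension by zero of a cochain on the nerve to lists of arbitrary sets of arbitrary length. -/
noncomputable def extendByZero (c : NerveSimplex α q → G) : List (Set Y) → G :=
  Function.extend (fun g => List.ofFn g.1) c 0

lemma extendByZero_ofFn (c : NerveSimplex α q → G) (g : NerveSimplex α q) :
    extendByZero c (List.ofFn g.1) = c g :=
  (List.ofFn_injective.comp Subtype.val_injective).extend_apply c 0 g

lemma extendByZero_eq_zero {c : NerveSimplex α q → G} {l : List (Set Y)}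
    (h : ∀ g : NerveSimplex α q, List.ofFn g.1 = l → c g = 0) : extendByZero c l = 0 := by
  by_cases hl : ∃ g : NerveSimplex α q, List.ofFn g.1 = l
  · obtain ⟨g, rfl⟩ := hl
    rw [extendByZero_ofFn, h g rfl]
  · exact Function.extend_apply' c (0 : List (Set Y) → G) l hl

lemma exists_nerveSimplex_ofFn_eq {l : List (Set Y)} (hlen : l.length = q + 1)
    (hα : ∀ U ∈ l, U ∈ α) {x : Y} (hx : ∀ U ∈ l, x ∈ U) :
    ∃ g : NerveSimplex α q, List.ofFn g.1 = l := by
  obtain ⟨f, rfl⟩ : ∃ f : Fin (q + 1) → Set Y, List.ofFn f = l :=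
    ⟨fun i => l.get (i.cast hlen.symm), by
      rw [← List.ofFn_congr hlen l.get, List.ofFn_get]⟩
  rw [List.forall_mem_ofFn_iff] at hα hx
  exact ⟨⟨f, hα, x, Set.mem_iInter.2 hx⟩, rfl⟩

lemma eraseIdx_ofFn {V : Type*} {n : ℕ} (f : Fin (n + 1) → V) (i : Fin (n + 1)) :
    (List.ofFn f).eraseIdx i = List.ofFn (f ∘ i.succAbove) := by
  refine List.ext_getElem (by simp [List.length_eraseIdx, i.is_le]) fun j _ _ => ?_
  simp only [List.getElem_eraseIdx, List.getElem_ofFn, Function.comp_apply]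
  split_ifs with hj
  · rw [Fin.succAbove_of_castSucc_lt _ _ hj]; rfl
  · rw [Fin.succAbove_of_le_castSucc _ _ (not_lt.1 hj)]; rfl

lemma coboundary_ofFn (φ : List (Set Y) → G) (g : NerveSimplex α (q + 1)) :
    coboundary φ (List.ofFn g.1) = cob (fun f : NerveSimplex α q => φ (List.ofFn f.1)) g := by
  simp only [coboundary, List.length_ofFn, cob, ← Fin.sum_univ_eq_sum_range
    (fun i => (-1 : ℤ) ^ i • φ ((List.ofFn g.1).eraseIdx i)), eraseIdx_ofFn, face]

lemma isRelCoboundary_of_isEmpty [IsEmpty Y] (A : Set Y) (c : NerveSimplex α q → G) :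
    IsRelCoboundary A q c := by
  have hempty (p : ℕ) (g : NerveSimplex α p) : False := isEmptyElim g.2.2.some
  cases q with
  | zero => exact fun g => (hempty 0 g).elim
  | succ q => exact ⟨0, fun _ _ => rfl, fun g => (hempty _ g).elim⟩

lemma NerveToCechNonzero.nonempty [TopologicalSpace Y] {A : Set Y} (hα : IsOpenCover α)
    (h : NerveToCechNonzero α A G q) : Nonempty Y := by
  by_contra hY
  rw [not_nonempty_iff] at hY
  obtain ⟨c, -, hc⟩ := h
  exact hc α hα (fun U hU => ⟨U, hU, subset_rfl⟩) id (fun U hU => ⟨subset_rfl, hU⟩)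
    (isRelCoboundary_of_isEmpty A _)

end NerveCochains

section Duality

variable {F : Type*} [Field F] {Y : Type*}

lemma exists_linearMap_apply_eq {E E' : Type*} [AddCommGroup E] [Module F E] [AddCommGroup E']
    [Module F E'] {S : Submodule F E} {T : Submodule F E'} {d : E →ₗ[F] E'} {ψ : E →ₗ[F] F}
    (h : ∀ z ∈ S, d z ∈ T → ψ z = 0) :
    ∃ b : E' →ₗ[F] F, (∀ x ∈ T, b x = 0) ∧ ∀ z ∈ S, b (d z) = ψ z := by
  let D : S →ₗ[F] E' ⧸ T := T.mkQ ∘ₗ d ∘ₗ S.subtype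
  have hann : ψ ∘ₗ S.subtype ∈ (LinearMap.ker D).dualAnnihilator := by
    refine (Submodule.mem_dualAnnihilator _).2 fun z hz => h z z.2 ?_
    simpa [D] using hz
  rw [← LinearMap.range_dualMap_eq_dualAnnihilator_ker] at hann
  obtain ⟨b, hb⟩ := hann
  exact ⟨b ∘ₗ T.mkQ, fun x hx => by simp [(Submodule.Quotient.mk_eq_zero T).2 hx],
    fun z hz => LinearMap.congr_fun hb ⟨z, hz⟩⟩

/-- Relative `q`-cycles of the pair of nerves of `β` and of the restriction of `β` to `A`. -/
noncomputable def nerveCycles (F : Type*) [Field F] {Y : Type*} (β : Set (Set Y)) (A : Set Y)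
    (q : ℕ) : Submodule F (SimplexChain F (Set Y)) :=
  Finsupp.supported F F (Set.range fun g : NerveSimplex β q => List.ofFn g.1) ⊓
    (Finsupp.supported F F {l | ∃ a ∈ A, ∀ V ∈ l, a ∈ V}).comap boundary

lemma isRelCoboundary_of_forall_nerveCycles {β : Set (Set Y)} {A : Set Y} {q : ℕ}
    {φ : List (Set Y) → F}
    (h : ∀ z ∈ nerveCycles F β A (q + 1), Finsupp.linearCombination F φ z = 0) :
    IsRelCoboundary A (q + 1) fun g : NerveSimplex β (q + 1) => φ (List.ofFn g.1) := by
  obtain ⟨b, hbA, hb⟩ := exists_linearMap_apply_eq fun z hz hbz =>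
    h z ⟨hz, Submodule.mem_comap.2 hbz⟩
  refine ⟨fun f => b (Finsupp.single (List.ofFn f.1) 1), fun f hf => ?_, fun g => ?_⟩
  · obtain ⟨a, haf, haA⟩ := hf
    exact hbA _ (Finsupp.single_mem_supported F _
      ⟨a, haA, (List.forall_mem_ofFn_iff).2 (Set.mem_iInter.1 haf)⟩)
  · rw [← coboundary_ofFn fun l => b (Finsupp.single l 1), ← map_coboundary, ← boundary_single,
      hb _ (Finsupp.single_mem_supported F _ ⟨g, rfl⟩), Finsupp.linearCombination_single, one_smul]

end Duality

section CechClasses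

variable {M : Type*} [PseudoMetricSpace M] {A : Set M}

lemma IsRelCocycle.isCocycleOfScale {R : Type*} [Ring R] {α : Set (Set M)} {q : ℕ}
    {c : NerveSimplex α q → R} (hc : IsRelCocycle A c) {r : ℝ} {u : M → Set M}
    (hu : ∀ x, u x ∈ α ∧ Metric.ball x r ⊆ u x) :
    IsCocycleOfScale A (r / 2) fun l => extendByZero c (l.map u) where
  coboundary_eq_zero l hl := by
    rw [← coboundary_map]
    by_cases hlen : l.length = q + 2
    · obtain ⟨x, hx⟩ := List.exists_mem_of_length_pos (by lia : 0 < l.length)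
      obtain ⟨g, hg⟩ := exists_nerveSimplex_ofFn_eq (α := α) (q := q + 1) (l := l.map u) (x := x)
        (by simpa using hlen) (List.forall_mem_map.2 fun y _ => (hu y).1)
        (List.forall_mem_map.2 fun y hy => (hu y).2 <| Metric.mem_ball.2 <| by
          linarith [hl x hx y hy, dist_nonneg (x := x) (y := y)])
      rw [← hg, coboundary_ofFn]
      simpa only [extendByZero_ofFn] using hc.2 g
    · refine (Submodule.mem_bot R).1 (coboundary_mem fun m hm _ => ?_)
      refine extendByZero_eq_zero fun g hg => (hlen ?_).elim
      simpa [← hg] using hm.symm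
  eq_zero_of_near l hl := by
    refine extendByZero_eq_zero fun g hg => hc.1 g ?_
    have hlen : l.length = q + 1 := by simpa using (congrArg List.length hg).symm
    obtain ⟨x, hx⟩ := List.exists_mem_of_length_pos (by lia : 0 < l.length)
    obtain ⟨a, ha, hxa⟩ := Metric.mem_thickening_iff.1 (hl.2 x hx)
    refine ⟨a, Set.mem_iInter.2 ?_, ha⟩
    rw [← List.forall_mem_ofFn_iff (P := fun U => a ∈ U), hg, List.forall_mem_map]
    refine fun y hy => (hu y).2 (Metric.mem_ball.2 ?_)
    linarith [hl.1 x hx y hy, dist_triangle_left a y x]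

section Balls

variable {β : Set (Set M)} {η : ℝ} {p : Set M → M} (hp : ∀ V ∈ β, V ⊆ Metric.ball (p V) η)
include hp

lemma map_mem_smallSimplices_of_subset_ball {l : List (Set M)} (hl : ∀ V ∈ l, V ∈ β) {x : M}
    (hx : ∀ V ∈ l, x ∈ V) : l.map p ∈ smallSimplices M (2 * η) := by
  simp only [smallSimplices, Set.mem_ofPred_eq, List.forall_mem_map]
  intro U hU V hV
  have hdist (W) (hW : W ∈ l) : dist x (p W) < η := hp W (hl W hW) (hx W hW)
  linarith [hdist U hU, hdist V hV, dist_triangle_left (p U) (p V) x]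

lemma mapVertices_mem_cyclesOfScale_of_mem_nerveCycles {F : Type*} [Field F] {q : ℕ} (hη : 0 ≤ η)
    {z : SimplexChain F (Set M)} (hz : z ∈ nerveCycles F β A q) :
    mapVertices p z ∈ cyclesOfScale F A q (2 * η) := by
  refine ⟨map_mem_of_mem_supported ?_ hz.1, ?_⟩
  · rintro _ ⟨g, rfl⟩
    obtain ⟨x, hx⟩ := g.2.2
    rw [mapVertices_single]
    exact Finsupp.single_mem_supported F _ ⟨map_mem_smallSimplices_of_subset_ball hp
      (List.forall_mem_ofFn_iff.2 g.2.1) (List.forall_mem_ofFn_iff.2 (Set.mem_iInter.1 hx)),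
      by simp⟩
  · have hβ : boundary z ∈ Finsupp.supported F F {l : List (Set M) | ∀ V ∈ l, V ∈ β} := by
      refine map_mem_of_mem_supported ?_ hz.1
      rintro _ ⟨g, rfl⟩
      refine Finsupp.supported_mono (fun l hl V hV => ?_) (boundary_single_mem_supported _)
      exact List.forall_mem_ofFn_iff.2 g.2.1 V (hl.2.subset hV)
    have hA := Submodule.mem_inf.2 ⟨hβ, Submodule.mem_comap.1 hz.2⟩
    rw [← Finsupp.supported_inter] at hA
    rw [SetLike.mem_coe, Submodule.mem_comap, boundary_mapVertices]
    refine map_mem_of_mem_supported ?_ hA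
    rintro l ⟨hlβ, a, haA, hal⟩
    rw [mapVertices_single]
    refine Finsupp.single_mem_supported F _ ⟨map_mem_smallSimplices_of_subset_ball hp hlβ hal,
      List.forall_mem_map.2 fun V hV => Metric.mem_thickening_iff.2 ⟨a, haA, ?_⟩⟩
    linarith [Metric.mem_ball'.1 (hp V (hlβ V hV) (hal V hV))]

end Balls

theorem NerveToCechNonzero.hasEssentialClass [CompactSpace M] {F : Type*} [Field F]
    {α : Set (Set M)} (hα : IsOpenCover α) {q : ℕ} (h : NerveToCechNonzero α A F (q + 1)) :
    HasEssentialClass F A (q + 1) := by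
  have _ : Nonempty M := h.nonempty hα
  obtain ⟨c, hc, hcob⟩ := h
  obtain ⟨r, hr, u, hu⟩ := hα.exists_ball_subset
  refine ⟨r / 2, half_pos hr, _, hc.isCocycleOfScale hu, fun δ hδ => ?_⟩
  by_contra! hcycles
  obtain ⟨η, hη, hηδ, hηr⟩ : ∃ η > 0, 2 * η ≤ δ ∧ η ≤ r :=
    ⟨min (δ / 2) r, by positivity, by linarith [min_le_left (δ / 2) r], min_le_right _ _⟩
  let β : Set (Set M) := Set.range fun x => Metric.ball x η
  let p : Set M → M := Function.invFun fun x => Metric.ball x η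
  have hp : ∀ V ∈ β, Metric.ball (p V) η = V := fun V hV => Function.invFun_eq hV
  have hup : ∀ V ∈ β, V ⊆ u (p V) ∧ u (p V) ∈ α := fun V hV =>
    ⟨(hp V hV).ge.trans ((Metric.ball_subset_ball hηr).trans (hu _).2), (hu _).1⟩
  refine hcob β (isOpenCover_range_ball hη) (fun V hV => ⟨_, (hup V hV).symm⟩) (u ∘ p) hup ?_
  have hφ := isRelCoboundary_of_forall_nerveCycles (β := β) (A := A) (q := q)
    (φ := fun l => extendByZero c ((l.map p).map u)) fun z hz => by
      rw [← linearCombination_mapVertices (fun l => extendByZero c (l.map u))]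
      exact hcycles _ (cyclesOfScale_mono A _ hηδ
        (mapVertices_mem_cyclesOfScale_of_mem_nerveCycles (fun V hV => (hp V hV).ge) hη.le hz))
  convert hφ using 2 with g
  rw [← extendByZero_ofFn c, List.map_map, List.map_ofFn]
  rfl

end CechClasses

section Dimension

variable {M : Type*} [PseudoMetricSpace M] [CompactSpace M] {n : ℕ}

theorem topDim_pi_le (hn : 1 ≤ n) : topDim (Fin n → M) ≤ n * topDim M := by
  induction n, hn using Nat.le_induction with
  | base => simpa using (topDim_congr (Homeomorph.funUnique (Fin 1) M)).le
  | succ n _ ih =>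
    calc topDim (Fin (n + 1) → M)
        = topDim ((Fin n → M) × (Fin 1 → M)) := topDim_congr (Fin.appendHomeomorph n 1).symm
      _ ≤ topDim (Fin n → M) + topDim (Fin 1 → M) := topDim_prod_le
      _ ≤ n * topDim M + topDim M :=
        add_le_add ih (topDim_congr (Homeomorph.funUnique (Fin 1) M)).le
      _ = (n + 1 : ℕ) * topDim M := by push_cast; ring

theorem le_topDim_pi (F : Type*) [Field F] (hn : 1 ≤ n) :
    n * cohomDim F M ≤ topDim (Fin n → M) := by
  simp only [cohomDim, ENat.mul_iSup]
  refine iSup₂_le fun q ⟨A, _, α, hα, h⟩ => ?_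
  cases q with
  | zero => simp
  | succ q =>
    obtain ⟨B, hB⟩ := (h.hasEssentialClass hα).exists_pi hn
    exact_mod_cast hB.le_topDim

end Dimension

theorem topDim_pow_of_field_general {K : Type*} [PseudoMetricSpace K] [CompactSpace K]
    (F : Type*) [Field F] (hF : topDim K ≤ cohomDim F K) :
    (∀ n : ℕ, 1 ≤ n → topDim (Fin n → K) = (n : ℕ∞) * topDim K) ∧
      topDim (K × K) = 2 * topDim K := by
  have hpow (n : ℕ) (hn : 1 ≤ n) : topDim (Fin n → K) = n * topDim K :=
    le_antisymm (topDim_pi_le hn) ((mul_le_mul_right hF _).trans (le_topDim_pi F hn))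
  exact ⟨hpow, (topDim_congr Homeomorph.finTwoArrow.symm).trans (hpow 2 one_le_two)⟩

/-- if a finite dimensional compact metric space `K` admits a field `F`
with `dim_F K = dim K`, then `dim Kⁿ = n ⬝ dim K` for every `n ≥ 1`; in particular `K`
is of basic type. -/
theorem topDim_pow_of_field {K : Type*} [MetricSpace K] [CompactSpace K]
    (hfin : topDim K ≠ ⊤)
    (F : Type*) [Field F] (hF : cohomDim F K = topDim K) :
    (∀ n : ℕ, 1 ≤ n → topDim (Fin n → K) = (n : ℕ∞) * topDim K) ∧
      topDim (K × K) = 2 * topDim K :=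
  topDim_pow_of_field_general F hF.ge

end MeanDimPaper
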